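/- arXiv:2303.11864 — 2 statements merged into one kernel-verified Lean document; each statement's English description precedes it below -/
import Mathlib

section
/- For every integer k ≥ 3, the meromorphically continued zeta function Z_{P_k}(s) = ∑_{n≥1} P_k(n)^{-s} satisfies Z_{P_k}(0) = 1/(2-k) and Z_{P_k}'(0) = log((k-2)/2)/(k-2) + log Γ(2/(k-2)) - log(2π). -/
open Filter Topology

/-- The `n`-th `k`-gonal number, as a real number (`n ≥ 1`). -/
noncomputable def polyNum (k n : ℕ) : ℝ :=
  (((k : ℝ) - 2) * (n : ℝ) ^ 2 - ((k : ℝ) - 4) * (n : ℝ)) / 2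

/-!
Write `P_k(n) = c n (n + a)` with `c = (k - 2) / 2` and `a = 2 / (k - 2) - 1`. Expanding
`(n (n + a))⁻ˢ = n⁻²ˢ (1 + a / n)⁻ˢ` to second order in `a / n` gives
`∑ (n (n + a))⁻ˢ = ζ(2s) - a s ζ(2s + 1) + ∑ Rₙ(s)` with `Rₙ(s) = O(n^(-2 Re s - 2))` locally
uniformly in `s`, so the right-hand side continues the series to `Re s > -1/2`. At `s = 0` every
`Rₙ` vanishes and `Rₙ'(0) = a / n - log (1 + a / n)`; by Euler's product these derivatives sum to
`a γ + log Γ(1 + a)`, and the `a γ` cancels against the derivative of `a s ζ(2s + 1)`.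
-/

section Taylor

theorem norm_sub_sub_smul_le_of_norm_deriv_deriv_le {𝕜 E : Type*} [RCLike 𝕜]
    [NormedAddCommGroup E] [NormedSpace 𝕜 E] {f f' f'' : 𝕜 → E} {S : Set 𝕜} {C : ℝ} {x y : 𝕜}
    (hf : ∀ z ∈ S, HasDerivWithinAt f (f' z) S z)
    (hf' : ∀ z ∈ S, HasDerivWithinAt f' (f'' z) S z) (bound : ∀ z ∈ S, ‖f'' z‖ ≤ C)
    (hS : Convex ℝ S) (hx : x ∈ S) (hy : y ∈ S) :
    ‖f y - f x - (y - x) • f' x‖ ≤ C * ‖y - x‖ ^ 2 := by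
  have hC : 0 ≤ C := (norm_nonneg _).trans (bound x hx)
  have hseg : segment ℝ x y ⊆ S := hS.segment_subset hx hy
  have hderiv : ∀ z ∈ segment ℝ x y,
      HasDerivWithinAt (fun w ↦ f w - w • f' x) (f' z - f' x) (segment ℝ x y) z := fun z hz ↦ by
    simpa using ((hf z (hseg hz)).mono hseg).fun_sub ((hasDerivWithinAt_id z _).smul_const (f' x))
  have hderiv_bound : ∀ z ∈ segment ℝ x y, ‖f' z - f' x‖ ≤ C * ‖y - x‖ := fun z hz ↦ calc
    ‖f' z - f' x‖ ≤ C * ‖z - x‖ :=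
      hS.norm_image_sub_le_of_norm_hasDerivWithin_le hf' bound hx (hseg hz)
    _ ≤ C * ‖y - x‖ := by
      gcongr
      exact norm_sub_le_of_mem_segment hz
  calc ‖f y - f x - (y - x) • f' x‖ = ‖f y - y • f' x - (f x - x • f' x)‖ := by
        congr 1; module
    _ ≤ C * ‖y - x‖ * ‖y - x‖ :=
      (convex_segment x y).norm_image_sub_le_of_norm_hasDerivWithin_le hderiv hderiv_bound
        (left_mem_segment ℝ x y) (right_mem_segment ℝ x y)
    _ = C * ‖y - x‖ ^ 2 := by ring

open Complex

theorem hasDerivAt_one_add_cpow_const {z : ℂ} (hz : 1 + z ∈ slitPlane) (w : ℂ) :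
    HasDerivAt (fun z ↦ (1 + z) ^ w) (w * (1 + z) ^ (w - 1)) z := by
  simpa using ((hasDerivAt_id z).const_add 1).cpow_const (c := w) hz

theorem exists_norm_one_add_cpow_sub_one_sub_mul_le {K S : Set ℂ} (hK : IsCompact K)
    (hSc : IsCompact S) (hS : Convex ℝ S) (h0 : 0 ∈ S) (hslit : ∀ z ∈ S, 1 + z ∈ slitPlane) :
    ∃ C, ∀ w ∈ K, ∀ z ∈ S, ‖(1 + z) ^ w - 1 - w * z‖ ≤ C * ‖z‖ ^ 2 := by
  have hcont : ContinuousOn (fun p : ℂ × ℂ ↦ p.1 * ((p.1 - 1) * (1 + p.2) ^ (p.1 - 1 - 1)))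
      (K ×ˢ S) :=
    continuousOn_fst.mul ((by fun_prop : ContinuousOn _ _).mul
      (ContinuousOn.cpow (by fun_prop) (by fun_prop) fun p hp ↦ hslit p.2 hp.2))
  obtain ⟨C, hC⟩ := (hK.prod hSc).exists_bound_of_continuousOn hcont
  refine ⟨C, fun w hw z hz ↦ ?_⟩
  have htaylor := norm_sub_sub_smul_le_of_norm_deriv_deriv_le
    (fun y hy ↦ (hasDerivAt_one_add_cpow_const (hslit y hy) w).hasDerivWithinAt)
    (fun y hy ↦
      ((hasDerivAt_one_add_cpow_const (hslit y hy) (w - 1)).const_mul w).hasDerivWithinAt)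
    (fun y hy ↦ hC (w, y) ⟨hw, hy⟩) hS h0 hz
  simpa [mul_comm z] using htaylor

end Taylor

theorem hasSum_deriv_of_summableLocallyUniformlyOn {ι E : Type*} [NormedAddCommGroup E]
    [NormedSpace ℂ E] [CompleteSpace E] {f : ι → ℂ → E} {U : Set ℂ} (hU : IsOpen U)
    (hf : SummableLocallyUniformlyOn f U) (hdiff : ∀ i, DifferentiableOn ℂ (f i) U) {z : ℂ}
    (hz : z ∈ U) : HasSum (fun i ↦ deriv (f i) z) (deriv (fun w ↦ ∑' i, f i w) z) := by
  have hsum := hasSumLocallyUniformlyOn_iff_tendstoLocallyUniformlyOn.mp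
    hf.hasSumLocallyUniformlyOn
  have hderiv := (hsum.deriv (.of_forall fun t ↦ .fun_sum fun i _ ↦ hdiff i) hU).tendsto_at hz
  refine hderiv.congr fun t ↦ ?_
  exact deriv_fun_sum fun i _ ↦ (hdiff i).differentiableAt (hU.mem_nhds hz)

section GammaSeries

theorem sum_div_sub_log_one_add_div_eq_logGammaSeq {a : ℝ} (ha : -1 < a) (N : ℕ) :
    ∑ n ∈ Finset.range N, (a / ((n : ℝ) + 1) - Real.log (1 + a / ((n : ℝ) + 1))) =
      a * ((harmonic N : ℝ) - Real.log N) + Real.BohrMollerup.logGammaSeq (1 + a) N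
        + (Real.log (1 + a + N) - Real.log N) := by
  have hsplit : ∑ n ∈ Finset.range N, (a / ((n : ℝ) + 1) - Real.log (1 + a / ((n : ℝ) + 1))) =
      a * (harmonic N : ℝ) + Real.log N.factorial
        - ∑ n ∈ Finset.range N, Real.log (1 + a + n) := by
    induction N with
    | zero => simp
    | succ N ih =>
      have hN : (0 : ℝ) < N + 1 := by positivity
      have hNa : (0 : ℝ) < 1 + a + N := by linarith [N.cast_nonneg (α := ℝ)]
      have hfrac : 1 + a / ((N : ℝ) + 1) = (1 + a + N) / (N + 1) := by field_simp; ring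
      rw [Finset.sum_range_succ, Finset.sum_range_succ, ih, harmonic_succ, Nat.factorial_succ,
        hfrac, Real.log_div hNa.ne' hN.ne']
      push_cast
      rw [Real.log_mul hN.ne' (by positivity)]
      ring
  rw [hsplit, Real.BohrMollerup.logGammaSeq, Finset.sum_range_succ]
  ring

theorem hasSum_div_sub_log_one_add_div {a : ℝ} (ha : -1 < a) :
    HasSum (fun n : ℕ ↦ a / ((n : ℝ) + 1) - Real.log (1 + a / ((n : ℝ) + 1)))
      (a * Real.eulerMascheroniConstant + Real.log (Real.Gamma (1 + a))) := by
  have ha' : 0 < 1 + a := by linarith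
  have hpos (n : ℕ) : 0 < 1 + a / ((n : ℝ) + 1) := by
    rw [one_add_div (by positivity)]
    have := n.cast_nonneg (α := ℝ)
    apply div_pos <;> linarith
  rw [hasSum_iff_tendsto_nat_of_nonneg fun n ↦ by
    linarith [Real.log_le_sub_one_of_pos (hpos n)]]
  simp_rw [sum_div_sub_log_one_add_div_eq_logGammaSeq ha]
  have hlog : Tendsto (fun N : ℕ ↦ Real.log (1 + a + N) - Real.log N) atTop (𝓝 0) := by
    simpa only [Function.comp_def, add_comm] using
      (Real.tendsto_log_comp_add_sub_log (1 + a)).comp tendsto_natCast_atTop_atTop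
  simpa using ((Real.tendsto_harmonic_sub_log.const_mul a).add
    (Real.BohrMollerup.tendsto_log_gamma ha')).add hlog

end GammaSeries

section QuadraticZeta

open Complex

/-- The `n`-th term of the remainder series in the continuation of `∑ (m (m + a))⁻ˢ`, namely
`m⁻²ˢ` times the second-order Taylor remainder of `(1 + a / m)⁻ˢ`, where `m = n + 1`. -/
noncomputable def cpowRemainder (a : ℂ) (n : ℕ) (s : ℂ) : ℂ :=
  ((n : ℂ) + 1) ^ (-(2 * s)) * ((1 + a / (n + 1)) ^ (-s) - 1 + s * (a / (n + 1)))

/-- The continuation of `∑_{m ≥ 1} (m (m + a))⁻ˢ` to `Re s > -1/2`. The entire function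
`riemannZeta₁ w = (w - 1) ζ(w)` encodes `a s ζ(2s + 1)` without a junk value at `s = 0`. -/
noncomputable def quadraticZeta (a s : ℂ) : ℂ :=
  riemannZeta (2 * s) - a / 2 * riemannZeta₁ (2 * s + 1) + ∑' n, cpowRemainder a n s

theorem div_natCast_add_one_mem_segment (a : ℂ) (n : ℕ) : a / (n + 1) ∈ segment ℝ 0 a := by
  rw [segment_eq_image]
  refine ⟨((n : ℝ) + 1)⁻¹, ⟨by positivity, inv_le_one_of_one_le₀ (by simp)⟩, ?_⟩
  simp [div_eq_inv_mul]

theorem one_add_mem_slitPlane_of_mem_segment {a z : ℂ} (ha : 1 + a ∈ slitPlane)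
    (hz : z ∈ segment ℝ 0 a) : 1 + z ∈ slitPlane := by
  have hz' : 1 + z ∈ segment ℝ (1 + 0) (1 + a) := (mem_segment_translate ℝ 1).mpr hz
  rw [add_zero] at hz'
  exact starConvex_one_slitPlane.segment_subset ha hz'

theorem one_add_div_natCast_add_one_mem_slitPlane {a : ℂ} (ha : 1 + a ∈ slitPlane) (n : ℕ) :
    1 + a / (n + 1) ∈ slitPlane :=
  one_add_mem_slitPlane_of_mem_segment ha (div_natCast_add_one_mem_segment a n)

theorem differentiable_cpowRemainder {a : ℂ} (ha : 1 + a ∈ slitPlane) (n : ℕ) :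
    Differentiable ℂ (cpowRemainder a n) := by
  have hslit := slitPlane_ne_zero (one_add_div_natCast_add_one_mem_slitPlane ha n)
  have hn : (n : ℂ) + 1 ≠ 0 := n.cast_add_one_ne_zero
  unfold cpowRemainder
  fun_prop (disch := simp [hslit, hn])

@[simp]
theorem cpowRemainder_zero (a : ℂ) (n : ℕ) : cpowRemainder a n 0 = 0 := by
  simp [cpowRemainder]

theorem deriv_cpowRemainder_zero {a : ℂ} (ha : 1 + a ∈ slitPlane) (n : ℕ) :
    deriv (cpowRemainder a n) 0 = a / (n + 1) - log (1 + a / (n + 1)) := by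
  have hslit := slitPlane_ne_zero (one_add_div_natCast_add_one_mem_slitPlane ha n)
  have hn : (n : ℂ) + 1 ≠ 0 := n.cast_add_one_ne_zero
  have hpow :=
    ((hasDerivAt_id (0 : ℂ)).const_mul 2).fun_neg.const_cpow (c := (n : ℂ) + 1) (.inl hn)
  have hbinom := (hasDerivAt_neg (0 : ℂ)).const_cpow (c := 1 + a / (n + 1)) (.inl hslit)
  have htaylor := (hbinom.sub_const 1).add ((hasDerivAt_id (0 : ℂ)).mul_const (a / (n + 1)))
  have h : HasDerivAt (cpowRemainder a n) _ 0 := hpow.mul htaylor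
  rw [h.deriv]
  simp only [id_eq, mul_zero, neg_zero, cpow_zero]
  ring

theorem norm_natCast_add_one_cpow_neg_two_mul_le {σ : ℝ} {s : ℂ} (hs : σ ≤ s.re) (n : ℕ) :
    ‖((n : ℂ) + 1) ^ (-(2 * s))‖ ≤ ((n : ℝ) + 1) ^ (-(2 * σ)) := by
  have hcast : (n : ℂ) + 1 = ((n + 1 : ℕ) : ℂ) := by push_cast; rfl
  rw [hcast, norm_natCast_cpow_of_pos n.succ_pos]
  push_cast
  exact Real.rpow_le_rpow_of_exponent_le (by simp) (by simpa using hs)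

theorem exists_norm_cpowRemainder_le {a : ℂ} (ha : 1 + a ∈ slitPlane) {K : Set ℂ}
    (hK : IsCompact K) {σ : ℝ} (hσ : ∀ s ∈ K, σ ≤ s.re) :
    ∃ C, ∀ n, ∀ s ∈ K, ‖cpowRemainder a n s‖ ≤ C * ((n : ℝ) + 1) ^ (-(2 * σ) - 2) := by
  have hsegment : IsCompact (segment ℝ 0 a) := by
    rw [← convexHull_pair]
    exact (Set.toFinite {0, a}).isCompact_convexHull ℝ
  obtain ⟨C, hC⟩ := exists_norm_one_add_cpow_sub_one_sub_mul_le hK.neg hsegment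
    (convex_segment 0 a) (left_mem_segment ℝ 0 a)
    fun _ ↦ one_add_mem_slitPlane_of_mem_segment ha
  refine ⟨C * ‖a‖ ^ 2, fun n s hs ↦ ?_⟩
  have htaylor := hC (-s) (Set.neg_mem_neg.mpr hs) _ (div_natCast_add_one_mem_segment a n)
  rw [neg_mul, sub_neg_eq_add] at htaylor
  have hnorm : ‖a / ((n : ℂ) + 1)‖ = ‖a‖ / ((n : ℝ) + 1) := by
    rw [norm_div]; norm_cast
  have hn : (0 : ℝ) < n + 1 := by positivity
  calc ‖cpowRemainder a n s‖
      ≤ ((n : ℝ) + 1) ^ (-(2 * σ)) * (C * ‖a / ((n : ℂ) + 1)‖ ^ 2) := by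
        rw [cpowRemainder, norm_mul]
        gcongr
        exact norm_natCast_add_one_cpow_neg_two_mul_le (hσ s hs) n
    _ = C * ‖a‖ ^ 2 * ((n : ℝ) + 1) ^ (-(2 * σ) - 2) := by
        rw [hnorm, Real.rpow_sub hn, Real.rpow_two]
        field_simp

theorem summableLocallyUniformlyOn_cpowRemainder {a : ℂ} (ha : 1 + a ∈ slitPlane) :
    SummableLocallyUniformlyOn (cpowRemainder a) {s | -(1 / 2) < s.re} := by
  refine SummableLocallyUniformlyOn_of_locally_bounded (isOpen_lt continuous_const continuous_re)
    fun K hKU hK ↦ ?_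
  obtain ⟨σ, hσ, hKσ⟩ : ∃ σ : ℝ, -(1 / 2) < σ ∧ ∀ s ∈ K, σ ≤ s.re := by
    rcases K.eq_empty_or_nonempty with rfl | hne
    · exact ⟨0, by norm_num, by simp⟩
    · obtain ⟨s, hs, hmin⟩ := hK.exists_isMinOn hne continuous_re.continuousOn
      exact ⟨s.re, hKU hs, hmin⟩
  obtain ⟨C, hC⟩ := exists_norm_cpowRemainder_le ha hK hKσ
  refine ⟨fun n ↦ C * ((n : ℝ) + 1) ^ (-(2 * σ) - 2), .mul_left _ ?_, hC⟩
  simpa using (summable_nat_add_iff 1).mpr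
    (Real.summable_nat_rpow.mpr (by linarith : -(2 * σ) - 2 < -1))

theorem differentiableAt_quadraticZeta {a s : ℂ} (ha : 1 + a ∈ slitPlane)
    (hs : -(1 / 2) < s.re) (hs' : s ≠ 1 / 2) : DifferentiableAt ℂ (quadraticZeta a) s := by
  have hopen : IsOpen {s : ℂ | -(1 / 2) < s.re} := isOpen_lt continuous_const continuous_re
  have hzeta : DifferentiableAt ℂ (fun s ↦ riemannZeta (2 * s)) s := by
    have h : 2 * s ≠ 1 := fun h ↦ hs' (by linear_combination h / 2)
    exact (differentiableAt_riemannZeta h).comp s (by fun_prop)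
  have hremainder : DifferentiableAt ℂ (fun s ↦ ∑' n, cpowRemainder a n s) s :=
    ((summableLocallyUniformlyOn_cpowRemainder ha).differentiableOn hopen
      fun n s _ ↦ differentiable_cpowRemainder ha n s).differentiableAt (hopen.mem_nhds hs)
  unfold quadraticZeta
  fun_prop

theorem ofReal_mul_cpow_of_nonneg {r : ℝ} (hr : 0 ≤ r) (z w : ℂ) :
    ((r : ℂ) * z) ^ w = (r : ℂ) ^ w * z ^ w := by
  rcases eq_or_ne w 0 with rfl | hw
  · simp
  rcases hr.eq_or_lt with rfl | hr
  · simp [hw]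
  rcases eq_or_ne z 0 with rfl | hz
  · simp [hw]
  have hr' : (r : ℂ) ≠ 0 := ofReal_ne_zero.mpr hr.ne'
  rw [cpow_def_of_ne_zero (mul_ne_zero hr' hz), log_ofReal_mul hr hz, ofReal_log hr.le, add_mul,
    exp_add, ← cpow_def_of_ne_zero hr', ← cpow_def_of_ne_zero hz]

theorem quadratic_cpow_neg_eq_add_cpowRemainder (a s : ℂ) (n : ℕ) :
    (((n : ℂ) + 1) * (n + 1 + a)) ^ (-s) =
      1 / ((n : ℂ) + 1) ^ (2 * s) - a * s * (1 / ((n : ℂ) + 1) ^ (2 * s + 1))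
        + cpowRemainder a n s := by
  have hn : (n : ℂ) + 1 ≠ 0 := n.cast_add_one_ne_zero
  have hfactor : ((n : ℂ) + 1) * (n + 1 + a) =
      ((n + 1 : ℝ) : ℂ) * (((n + 1 : ℝ) : ℂ) * (1 + a / (n + 1))) := by
    push_cast
    field_simp
  have hsq : ((n : ℂ) + 1) ^ (-(2 * s)) = ((n : ℂ) + 1) ^ (-s) * ((n : ℂ) + 1) ^ (-s) := by
    rw [← cpow_add _ _ hn]
    congr 1
    ring
  have hpow : 1 / ((n : ℂ) + 1) ^ (2 * s) = ((n : ℂ) + 1) ^ (-(2 * s)) := by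
    rw [cpow_neg, one_div]
  have hpow_succ : 1 / ((n : ℂ) + 1) ^ (2 * s + 1) = ((n : ℂ) + 1) ^ (-(2 * s)) / (n + 1) := by
    rw [cpow_add _ _ hn, cpow_one, ← hpow, div_div]
  rw [hfactor, ofReal_mul_cpow_of_nonneg (by positivity),
    ofReal_mul_cpow_of_nonneg (by positivity), hpow, hpow_succ, cpowRemainder, hsq]
  push_cast
  ring

theorem quadraticZeta_eq_tsum {a s : ℂ} (ha : 1 + a ∈ slitPlane) (hs : 1 / 2 < s.re) :
    quadraticZeta a s = ∑' n : ℕ, (((n : ℂ) + 1) * (n + 1 + a)) ^ (-s) := by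
  have hre : 1 < (2 * s).re := by rw [mul_re, re_ofNat, im_ofNat]; linarith
  have hre_succ : 1 < (2 * s + 1).re := by rw [add_re, one_re]; linarith
  have hs0 : s ≠ 0 := by rintro rfl; norm_num at hs
  have hsummable (w : ℂ) (hw : 1 < w.re) : Summable fun n : ℕ ↦ 1 / ((n : ℂ) + 1) ^ w := by
    simpa using (summable_nat_add_iff 1).mpr (summable_one_div_nat_cpow.mpr hw)
  have hremainder : Summable fun n ↦ cpowRemainder a n s :=
    (summableLocallyUniformlyOn_cpowRemainder ha).summable (by linarith : -(1 / 2) < s.re)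
  have hzeta₁ : a / 2 * riemannZeta₁ (2 * s + 1) = a * s * riemannZeta (2 * s + 1) := by
    rw [riemannZeta_eq_inv_sub_mul (by simpa using hs0)]
    field_simp
    ring
  simp_rw [quadratic_cpow_neg_eq_add_cpowRemainder]
  rw [((hsummable _ hre).sub ((hsummable _ hre_succ).mul_left _)).tsum_add hremainder,
    (hsummable _ hre).tsum_sub ((hsummable _ hre_succ).mul_left _), tsum_mul_left,
    ← zeta_eq_tsum_one_div_nat_add_one_cpow hre,
    ← zeta_eq_tsum_one_div_nat_add_one_cpow hre_succ, quadraticZeta, hzeta₁]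

@[simp]
theorem quadraticZeta_zero (a : ℂ) : quadraticZeta a 0 = -(1 + a) / 2 := by
  simp only [quadraticZeta, mul_zero, zero_add, riemannZeta_zero, riemannZeta₁_one,
    cpowRemainder_zero, tsum_zero]
  ring

theorem deriv_quadraticZeta_zero {a : ℂ} (ha : 1 + a ∈ slitPlane) :
    deriv (quadraticZeta a) 0 = -log (2 * Real.pi) - a * Real.eulerMascheroniConstant
      + ∑' n : ℕ, (a / (n + 1) - log (1 + a / (n + 1))) := by
  have hopen : IsOpen {s : ℂ | -(1 / 2) < s.re} := isOpen_lt continuous_const continuous_re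
  have h0 : (0 : ℂ) ∈ {s : ℂ | -(1 / 2) < s.re} := by norm_num
  have hsum := summableLocallyUniformlyOn_cpowRemainder ha
  have hzeta : HasDerivAt (fun s ↦ riemannZeta (2 * s)) (2 * deriv riemannZeta 0) 0 := by
    have h : HasDerivAt riemannZeta (deriv riemannZeta 0) (2 * 0) := by
      rw [mul_zero]
      exact (differentiableAt_riemannZeta zero_ne_one).hasDerivAt
    simpa [Function.comp_def, mul_comm] using h.comp 0 ((hasDerivAt_id (0 : ℂ)).const_mul 2)
  have hzeta₁ : HasDerivAt (fun s ↦ riemannZeta₁ (2 * s + 1))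
      (2 * Real.eulerMascheroniConstant) 0 := by
    have h : HasDerivAt riemannZeta₁ Real.eulerMascheroniConstant (2 * 0 + 1) := by
      rw [mul_zero, zero_add, ← deriv_riemannZeta₁_one]
      exact (differentiable_riemannZeta₁ 1).hasDerivAt
    simpa [Function.comp_def, mul_comm] using
      h.comp 0 (((hasDerivAt_id (0 : ℂ)).const_mul 2).add_const 1)
  have hremainder := ((hsum.differentiableOn hopen fun n s _ ↦
    differentiable_cpowRemainder ha n s).differentiableAt (hopen.mem_nhds h0)).hasDerivAt
  rw [← (hasSum_deriv_of_summableLocallyUniformlyOn hopen hsum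
    (fun n ↦ (differentiable_cpowRemainder ha n).differentiableOn) h0).tsum_eq] at hremainder
  simp_rw [deriv_cpowRemainder_zero ha] at hremainder
  have h : HasDerivAt (quadraticZeta a) _ 0 := (hzeta.sub (hzeta₁.const_mul (a / 2))).add hremainder
  rw [h.deriv, deriv_riemannZeta_zero]
  ring

theorem deriv_quadraticZeta_ofReal_zero {a : ℝ} (ha : -1 < a) :
    deriv (quadraticZeta a) 0 =
      ((Real.log (Real.Gamma (1 + a)) - Real.log (2 * Real.pi) : ℝ) : ℂ) := by
  have hslit : 1 + (a : ℂ) ∈ slitPlane := by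
    exact_mod_cast ofReal_mem_slitPlane.mpr (by linarith : 0 < 1 + a)
  have hterm (n : ℕ) : (a : ℂ) / (n + 1) - log (1 + a / (n + 1)) =
      ((a / ((n : ℝ) + 1) - Real.log (1 + a / ((n : ℝ) + 1)) : ℝ) : ℂ) := by
    have h : 1 + (a : ℂ) / (n + 1) = ((1 + a / ((n : ℝ) + 1) : ℝ) : ℂ) := by push_cast; rfl
    have hpos : 0 < 1 + a / ((n : ℝ) + 1) := by
      rw [← ofReal_mem_slitPlane, ← h]
      exact one_add_div_natCast_add_one_mem_slitPlane hslit n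
    rw [h, ← ofReal_log hpos.le]
    push_cast
    rfl
  have hlog : log (2 * Real.pi) = (Real.log (2 * Real.pi) : ℝ) := by
    rw [ofReal_log (by positivity)]
    push_cast
    rfl
  rw [deriv_quadraticZeta_zero hslit, tsum_congr hterm, ← ofReal_tsum,
    (hasSum_div_sub_log_one_add_div ha).tsum_eq, hlog]
  push_cast
  ring

end QuadraticZeta

section Uniqueness

open Complex

theorem isPreconnected_halfPlane_re_gt_sdiff_singleton (x : ℝ) (p : ℂ) :
    IsPreconnected ({s : ℂ | x < s.re} \ {p}) := by
  by_cases hp : x < p.re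
  · -- `φ` carries the punctured plane to the punctured half-plane.
    let φ : ℂ → ℂ := fun w ↦ ((x + Real.exp w.re : ℝ) : ℂ) + w.im * I
    have hre (w : ℂ) : (φ w).re = x + Real.exp w.re := by simp [φ, exp_ofReal_re]
    have him (w : ℂ) : (φ w).im = w.im := by simp [φ]
    have hcont : Continuous φ := by fun_prop
    have hinj : Function.Injective φ := fun w z h ↦ by
      simpa [Complex.ext_iff, hre, him] using h
    have hright (s : ℂ) (hs : x < s.re) : φ ⟨Real.log (s.re - x), s.im⟩ = s := by
      simp [Complex.ext_iff, hre, him, Real.exp_log (sub_pos.mpr hs)]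
    have hrange : Set.range φ = {s | x < s.re} := by
      refine Set.Subset.antisymm ?_ fun s hs ↦ ⟨_, hright s hs⟩
      rintro _ ⟨w, rfl⟩
      simp [hre, Real.exp_pos]
    rw [← hrange, ← hright p hp, ← Set.image_singleton, ← Set.image_compl_eq_range_sdiff_image hinj]
    exact (isConnected_compl_singleton_of_one_lt_rank (by simp) _).isPreconnected.image φ
      hcont.continuousOn
  · rw [Set.sdiff_singleton_eq_self (s := {s : ℂ | x < s.re}) hp]
    exact (convex_halfSpace_re_gt x).isPreconnected

theorem eqOn_of_eqOn_halfPlane_re_gt {E : Type*} [NormedAddCommGroup E] [NormedSpace ℂ E]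
    [CompleteSpace E] {f g : ℂ → E} {x y : ℝ} {p : ℂ}
    (hf : DifferentiableOn ℂ f ({s | x < s.re} \ {p}))
    (hg : DifferentiableOn ℂ g ({s | x < s.re} \ {p}))
    (hfg : Set.EqOn f g {s | y < s.re}) : Set.EqOn f g ({s | x < s.re} \ {p}) := by
  have hopen : IsOpen ({s : ℂ | x < s.re} \ {p}) :=
    (isOpen_lt continuous_const continuous_re).sdiff isClosed_singleton
  obtain ⟨t, ht⟩ := exists_gt (max p.re (max x y))
  simp only [max_lt_iff] at ht
  have hmem : (t : ℂ) ∈ {s : ℂ | x < s.re} \ {p} :=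
    ⟨ht.2.1, fun h ↦ ht.1.ne (congrArg re h).symm⟩
  have hev : f =ᶠ[𝓝 (t : ℂ)] g :=
    hfg.eventuallyEq_of_mem ((isOpen_lt continuous_const continuous_re).mem_nhds ht.2.2)
  exact (hf.analyticOnNhd hopen).eqOn_of_preconnected_of_eventuallyEq (hg.analyticOnNhd hopen)
    (isPreconnected_halfPlane_re_gt_sdiff_singleton x p) hmem hev

theorem eqOn_cpow_neg_mul_quadraticZeta {a : ℂ} (ha : 1 + a ∈ slitPlane) {c : ℝ} (hc : 0 < c)
    {Z : ℂ → ℂ} (hZ : DifferentiableOn ℂ Z {s | -(1 / 2) < s.re ∧ s ≠ 1 / 2})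
    (hseries : ∀ s : ℂ, 1 / 2 < s.re →
      Z s = ∑' n : ℕ, ((c : ℂ) * ((n + 1) * (n + 1 + a))) ^ (-s)) :
    Set.EqOn Z (fun s ↦ (c : ℂ) ^ (-s) * quadraticZeta a s)
      {s | -(1 / 2) < s.re ∧ s ≠ 1 / 2} := by
  refine eqOn_of_eqOn_halfPlane_re_gt (y := 1 / 2) hZ (fun s hs ↦ ?_) fun s hs ↦ ?_
  · have hc' : (c : ℂ) ≠ 0 := ofReal_ne_zero.mpr hc.ne'
    exact ((differentiableAt_id.neg.const_cpow (.inl hc')).mul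
      (differentiableAt_quadraticZeta ha hs.1 hs.2)).differentiableWithinAt
  · simp_rw [hseries s hs, ofReal_mul_cpow_of_nonneg hc.le, tsum_mul_left]
    rw [quadraticZeta_eq_tsum ha hs]

end Uniqueness

theorem deriv_cpow_neg_mul_zero {c : ℝ} (hc : 0 < c) {f : ℂ → ℂ} (hf : DifferentiableAt ℂ f 0) :
    deriv (fun s ↦ (c : ℂ) ^ (-s) * f s) 0 = deriv f 0 - Real.log c * f 0 := by
  have hc' : (c : ℂ) ≠ 0 := Complex.ofReal_ne_zero.mpr hc.ne'
  have h := ((hasDerivAt_neg (0 : ℂ)).const_cpow (c := (c : ℂ)) (.inl hc')).mul hf.hasDerivAt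
  refine h.deriv.trans ?_
  simp only [neg_zero, Complex.cpow_zero, ← Complex.ofReal_log hc.le]
  ring

theorem apply_zero_and_deriv_zero_of_eq_tsum_quadratic {a c : ℝ} (ha : -1 < a) (hc : 0 < c)
    {Z : ℂ → ℂ} (hZ : DifferentiableOn ℂ Z {s | -(1 / 2) < s.re ∧ s ≠ 1 / 2})
    (hseries : ∀ s : ℂ, 1 / 2 < s.re →
      Z s = ∑' n : ℕ, ((c : ℂ) * ((n + 1) * (n + 1 + a))) ^ (-s)) :
    Z 0 = -(1 + a) / 2 ∧
    deriv Z 0 = ((Real.log c * (1 + a) / 2 + Real.log (Real.Gamma (1 + a))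
      - Real.log (2 * Real.pi) : ℝ) : ℂ) := by
  have hslit : 1 + (a : ℂ) ∈ Complex.slitPlane := by
    exact_mod_cast Complex.ofReal_mem_slitPlane.mpr (by linarith : 0 < 1 + a)
  have hopen : IsOpen {s : ℂ | -(1 / 2) < s.re ∧ s ≠ 1 / 2} :=
    (isOpen_lt continuous_const Complex.continuous_re).inter isOpen_ne
  have heq : Z =ᶠ[𝓝 0] fun s ↦ (c : ℂ) ^ (-s) * quadraticZeta a s :=
    (eqOn_cpow_neg_mul_quadraticZeta hslit hc hZ hseries).eventuallyEq_of_mem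
      (hopen.mem_nhds (by norm_num))
  have hdiff : DifferentiableAt ℂ (quadraticZeta a) 0 :=
    differentiableAt_quadraticZeta hslit (by norm_num) (by norm_num)
  refine ⟨by simp [heq.eq_of_nhds], ?_⟩
  rw [heq.deriv_eq, deriv_cpow_neg_mul_zero hc hdiff, deriv_quadraticZeta_ofReal_zero ha,
    quadraticZeta_zero]
  push_cast
  ring

theorem stmt5_general {k : ℝ} (hk : 2 < k) {Z : ℂ → ℂ}
    (hhol : DifferentiableOn ℂ Z {s : ℂ | -(1 / 2) < s.re ∧ s ≠ 1 / 2})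
    (hser : ∀ s : ℂ, 1 / 2 < s.re →
      Z s = ∑' n : ℕ,
        ((((k - 2) * ((n : ℝ) + 1) ^ 2 - (k - 4) * ((n : ℝ) + 1)) / 2 : ℝ) : ℂ) ^ (-s)) :
    Z 0 = 1 / (2 - (k : ℂ)) ∧
    deriv Z 0 =
      ((Real.log ((k - 2) / 2) / (k - 2) + Real.log (Real.Gamma (2 / (k - 2)))
        - Real.log (2 * Real.pi) : ℝ) : ℂ) := by
  have hk' : 0 < k - 2 := by linarith
  have ha : -1 < 2 / (k - 2) - 1 := by linarith [div_pos two_pos hk']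
  have hfactor (n : ℕ) : (((k - 2) * ((n : ℝ) + 1) ^ 2 - (k - 4) * ((n : ℝ) + 1)) / 2 : ℝ) =
      (k - 2) / 2 * ((n + 1) * (n + 1 + (2 / (k - 2) - 1))) := by
    field_simp
    ring
  obtain ⟨hZ0, hZ0'⟩ := apply_zero_and_deriv_zero_of_eq_tsum_quadratic ha (half_pos hk') hhol
    fun s hs ↦ by simpa [hfactor] using hser s hs
  have hkC : (k : ℂ) - 2 ≠ 0 := by exact_mod_cast hk'.ne'
  refine ⟨?_, ?_⟩
  · rw [hZ0, ← neg_sub (k : ℂ) 2]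
    push_cast
    field_simp
    ring
  · rw [hZ0', add_sub_cancel]
    congr 3
    field_simp

theorem stmt5 (k : ℕ) (hk : 3 ≤ k) (Z : ℂ → ℂ)
    (hhol : DifferentiableOn ℂ Z {s : ℂ | -(1 / 2) < s.re ∧ s ≠ 1 / 2})
    (hser : ∀ s : ℂ, 1 / 2 < s.re →
      Z s = ∑' n : ℕ, ((polyNum k (n + 1) : ℝ) : ℂ) ^ (-s)) :
    Z 0 = 1 / (2 - (k : ℂ)) ∧
    deriv Z 0 =
      ((Real.log (((k : ℝ) - 2) / 2) / ((k : ℝ) - 2)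
        + Real.log (Real.Gamma (2 / ((k : ℝ) - 2))) - Real.log (2 * Real.pi) : ℝ) : ℂ) :=
  stmt5_general (by exact_mod_cast hk) hhol (by simpa [polyNum] using hser)
end

section
/- The Witten zeta function of so(5), defined for Re(s) > 1/2 by ζ_{so(5)}(s) = 6^s ∑_{m,n ≥ 1} 1/( m^s n^s (m+n)^s (m+2n)^s ), satisfies ζ_{so(5)}(0) = 3/8 after meromorphic continuation. -/
open Filter Topology

/-! The sum over `n` of `(k * n * (n + a * k) * (n + b * k)) ^ (-s)` continues in `s` beyond its
domain of convergence as `k ^ (-s)` times `ζ(3 s)` plus an absolutely convergent correction, and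
this continuation grows at most linearly in `k`. Hence the alternating sum `A(a, b)` of these
rows, summed by an Euler transform, is holomorphic on `0 < re s` up to the pole at `1 / 3`.

The even rows of the form with parameters `(1, 2)` give the form with parameters `(1 / 2, 1 / 4)`,
and conversely, so the double series `S` satisfies
`(1 - 4 * 16 ^ (-s)) * S = A(1, 2) + 2 * 16 ^ (-s) * A(1 / 2, 1 / 4)`.

As `s → 0⁺` the row `k` tends to `-1 / 2 - (a + b) * k / 3`; the second term survives because the
correction contains `-(a + b) * k * s * ζ(1 + 3 s)`, and `s * ζ(1 + 3 s)` tends to `1 / 3`. The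
alternating sum of this affine sequence is `-1 / 4 - (a + b) / 12`, so the right-hand side tends to
`-9 / 8` while the factor on the left tends to `-3`. -/

open scoped fwdDiff

section EulerTransform

variable {𝕜 : Type*} [NormedField 𝕜]

/-- The alternating sum `u 0 - u 1 + u 2 - ⋯`, as an unconditional sum. -/
noncomputable def altSum (u : ℕ → 𝕜) : 𝕜 := ∑' k, (-1) ^ k * u k

/-- The order-`m` Euler transform of the alternating series with terms `u`. It is the alternating
sum of `u` when `u` is summable, and extends it to sequences whose `m`-th difference is summable. -/
noncomputable def eulerSum (m : ℕ) (u : ℕ → 𝕜) : 𝕜 :=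
  ∑ j ∈ Finset.range m, (-1 / 2) ^ j * ((Δ_[1])^[j] u 0 / 2) + (-1 / 2) ^ m * altSum ((Δ_[1])^[m] u)

theorem tendsto_fwdDiff_iter {ι M G : Type*} [AddCommMonoid M] [AddCommGroup G] [TopologicalSpace G]
    [IsTopologicalAddGroup G] {l : Filter ι} {f : ι → M → G} {g : M → G}
    (h : ∀ x, Tendsto (f · x) l (𝓝 (g x))) (c : M) (m : ℕ) (x : M) :
    Tendsto (fun i ↦ (Δ_[c])^[m] (f i) x) l (𝓝 ((Δ_[c])^[m] g x)) := by
  simp only [fwdDiff_iter_eq_sum_shift]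
  exact tendsto_finsetSum _ fun j _ ↦ (h _).const_smul _

theorem summable_fwdDiff {u : ℕ → 𝕜} (hu : Summable u) : Summable (Δ_[1] u) :=
  ((summable_nat_add_iff 1).2 hu).sub hu

theorem eulerSum_succ (m : ℕ) (u : ℕ → 𝕜) :
    eulerSum (m + 1) u = u 0 / 2 - eulerSum m (Δ_[1] u) / 2 := by
  simp only [eulerSum, Finset.sum_range_succ', Function.iterate_succ_apply, Function.iterate_zero,
    id_eq, add_div, Finset.sum_div, pow_succ, pow_zero, one_mul]
  have hsum : ∑ j ∈ Finset.range m, (-1 / 2) ^ j * (-1 / 2) * ((Δ_[1])^[j] (Δ_[1] u) 0 / 2) =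
      -∑ j ∈ Finset.range m, (-1 / 2) ^ j * ((Δ_[1])^[j] (Δ_[1] u) 0 / 2) / 2 := by
    rw [← Finset.sum_neg_distrib]
    exact Finset.sum_congr rfl fun j _ ↦ by ring
  rw [hsum]
  ring

theorem eulerSum_succ_const (m : ℕ) (c : 𝕜) : eulerSum (m + 1) (fun _ ↦ c) = c / 2 := by
  induction m generalizing c with
  | zero => simp [eulerSum, altSum]
  | succ m ih => simp [eulerSum_succ (m + 1), ih]

theorem eulerSum_add_two_affine (m : ℕ) (c d : 𝕜) :
    eulerSum (m + 2) (fun k ↦ c + d * k) = (c - d / 2) / 2 := by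
  have hΔ : Δ_[1] (fun k : ℕ ↦ c + d * k) = fun _ ↦ d := by
    funext k
    simp only [fwdDiff, Nat.cast_add_one]
    ring
  rw [eulerSum_succ, hΔ, eulerSum_succ_const, Nat.cast_zero]
  ring

variable [CompleteSpace 𝕜]

theorem summable_neg_one_pow_mul {u : ℕ → 𝕜} (hu : Summable u) :
    Summable fun k ↦ (-1) ^ k * u k := by
  have heven : Summable fun k ↦ u (2 * k) := hu.comp_injective fun i j h ↦ by simpa using h
  have hodd : Summable fun k ↦ u (2 * k + 1) := hu.comp_injective fun i j h ↦ by simpa using h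
  refine Summable.even_add_odd ?_ ?_
  · simpa [pow_mul] using heven
  · simpa [pow_mul, pow_succ] using hodd.neg

theorem altSum_eq_tsum_sub_two_mul_tsum_odd {u : ℕ → 𝕜} (hu : Summable u) :
    altSum u = ∑' k, u k - 2 * ∑' k, u (2 * k + 1) := by
  have heven : Summable fun k ↦ u (2 * k) := hu.comp_injective fun i j h ↦ by simpa using h
  have hodd : Summable fun k ↦ u (2 * k + 1) := hu.comp_injective fun i j h ↦ by simpa using h
  have halt : altSum u = ∑' k, u (2 * k) - ∑' k, u (2 * k + 1) := by
    rw [altSum, ← tsum_even_add_odd]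
    · simp [pow_succ, pow_mul, tsum_neg, sub_eq_add_neg]
    · simpa [pow_mul] using heven
    · simpa [pow_mul, pow_succ] using hodd.neg
  rw [halt, ← tsum_even_add_odd heven hodd]
  ring

theorem altSum_eq_half_sub [NeZero (2 : 𝕜)] {u : ℕ → 𝕜} (hu : Summable u) :
    altSum u = u 0 / 2 - altSum (Δ_[1] u) / 2 := by
  have hshift : Summable fun k ↦ u (k + 1) := (summable_nat_add_iff 1).2 hu
  have hdiff : altSum (Δ_[1] u) = altSum (fun k ↦ u (k + 1)) - altSum u := by
    simp only [altSum, fwdDiff, mul_sub]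
    exact (summable_neg_one_pow_mul hshift).tsum_sub (summable_neg_one_pow_mul hu)
  have hhead : altSum u = u 0 - altSum (fun k ↦ u (k + 1)) := by
    rw [altSum, (summable_neg_one_pow_mul hu).tsum_eq_zero_add, altSum, sub_eq_add_neg, ← tsum_neg]
    simp [pow_succ]
  have h2 : (2 : 𝕜) ≠ 0 := two_ne_zero
  rw [hdiff]
  field_simp
  linear_combination hhead

theorem eulerSum_eq_altSum [NeZero (2 : 𝕜)] {u : ℕ → 𝕜} (hu : Summable u) (m : ℕ) :
    eulerSum m u = altSum u := by
  induction m generalizing u with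
  | zero => simp [eulerSum]
  | succ m ih => rw [eulerSum_succ, ih (summable_fwdDiff hu), altSum_eq_half_sub hu]

theorem altSum_tsum {β : Type*} {f : ℕ × β → 𝕜} (hf : Summable f) :
    altSum (fun k ↦ ∑' n, f (k, n)) = ∑' p, f p - 2 * ∑' p : ℕ × β, f (2 * p.1 + 1, p.2) := by
  have hodd : Summable fun p : ℕ × β ↦ f (2 * p.1 + 1, p.2) :=
    hf.comp_injective (i := fun p : ℕ × β ↦ (2 * p.1 + 1, p.2)) fun p q h ↦ by
      simpa [Prod.ext_iff] using h
  rw [altSum_eq_tsum_sub_two_mul_tsum_odd hf.prod, hf.tsum_prod, hodd.tsum_prod]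

end EulerTransform

section FwdDiff

open Set

variable {E : Type*} [NormedAddCommGroup E] [NormedSpace ℂ E] [CompleteSpace E]

theorem differentiableOn_iteratedDeriv {g : ℂ → E} {U : Set ℂ} (hU : IsOpen U)
    (hg : DifferentiableOn ℂ g U) (m : ℕ) : DifferentiableOn ℂ (iteratedDeriv m g) U := by
  induction m with
  | zero => simpa using hg
  | succ m ih => simpa only [iteratedDeriv_succ] using ih.deriv hU

theorem norm_iteratedDeriv_fwdDiff_le {g : ℂ → E} {U : Set ℂ} (hU : IsOpen U)
    (hg : DifferentiableOn ℂ g U) (m : ℕ) {y h : ℂ} (hsub : segment ℝ y (y + h) ⊆ U) {B : ℝ}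
    (hB : ∀ z ∈ segment ℝ y (y + h), ‖iteratedDeriv (m + 1) g z‖ ≤ B) :
    ‖iteratedDeriv m (Δ_[h] g) y‖ ≤ B * ‖h‖ := by
  have hsmooth : ∀ {z}, z ∈ U → ContDiffAt ℂ m g z := fun hz ↦
    (hg.contDiffOn hU).contDiffAt (hU.mem_nhds hz)
  have hy : y ∈ U := hsub (left_mem_segment ℝ _ _)
  have hyh : y + h ∈ U := hsub (right_mem_segment ℝ _ _)
  have hcomm : iteratedDeriv m (Δ_[h] g) y = iteratedDeriv m g (y + h) - iteratedDeriv m g y := by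
    have hshift : ContDiffAt ℂ m (fun z ↦ g (z + h)) y :=
      ContDiffAt.comp (g := g) y (hsmooth hyh) (by fun_prop)
    unfold fwdDiff
    rw [iteratedDeriv_fun_sub hshift (hsmooth hy), iteratedDeriv_comp_add_const]
  have hmvt := (convex_segment (𝕜 := ℝ) y (y + h)).norm_image_sub_le_of_norm_deriv_le
    (f := iteratedDeriv m g)
    (fun z hz ↦ (differentiableOn_iteratedDeriv hU hg m).differentiableAt (hU.mem_nhds (hsub hz)))
    (fun z hz ↦ by simpa only [iteratedDeriv_succ] using hB z hz)
    (left_mem_segment ℝ _ _) (right_mem_segment ℝ _ _)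
  rwa [hcomm, ← add_sub_cancel_left y h, add_sub_cancel]

theorem norm_fwdDiff_iter_le_of_norm_iteratedDeriv_le (m : ℕ) {g : ℂ → E} {U : Set ℂ}
    (hU : IsOpen U) (hg : DifferentiableOn ℂ g U) {x h : ℂ} {B : ℝ}
    (hxU : ∀ t ∈ Icc (0 : ℝ) m, x + t * h ∈ U)
    (hB : ∀ t ∈ Icc (0 : ℝ) m, ‖iteratedDeriv m g (x + t * h)‖ ≤ B) :
    ‖(Δ_[h])^[m] g x‖ ≤ B * ‖h‖ ^ m := by
  induction m generalizing g U B with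
  | zero => simpa using hB 0 (by simp)
  | succ m ih =>
    have hsegment : ∀ t ∈ Icc (0 : ℝ) m, ∀ z ∈ segment ℝ (x + t * h) (x + t * h + h),
        ∃ t' ∈ Icc (0 : ℝ) (m + 1 : ℕ), z = x + t' * h := by
      rintro t ht z hz
      rw [segment_eq_image'] at hz
      obtain ⟨θ, hθ, rfl⟩ := hz
      refine ⟨t + θ, ⟨add_nonneg ht.1 hθ.1, ?_⟩, ?_⟩
      · push_cast
        exact add_le_add ht.2 hθ.2
      · simp only [add_sub_cancel_left, Complex.real_smul, Complex.ofReal_add]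
        ring
    have hsub : ∀ t ∈ Icc (0 : ℝ) m, segment ℝ (x + t * h) (x + t * h + h) ⊆ U := by
      intro t ht z hz
      obtain ⟨t', ht', rfl⟩ := hsegment t ht z hz
      exact hxU t' ht'
    have hΔ : DifferentiableOn ℂ (Δ_[h] g) (U ∩ (· + h) ⁻¹' U) :=
      (hg.comp (by fun_prop) fun z hz ↦ hz.2).sub (hg.mono inter_subset_left)
    rw [Function.iterate_succ_apply, pow_succ', ← mul_assoc]
    refine ih (hU.inter (hU.preimage (by fun_prop))) hΔ (fun t ht ↦ ?_) fun t ht ↦ ?_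
    · exact ⟨hsub t ht (left_mem_segment ℝ _ _), hsub t ht (right_mem_segment ℝ _ _)⟩
    · refine norm_iteratedDeriv_fwdDiff_le hU hg m (hsub t ht) fun z hz ↦ ?_
      obtain ⟨t', ht', rfl⟩ := hsegment t ht z hz
      exact hB t' ht'

end FwdDiff

section LinearGrowth

/-- The right half-plane `0 < re z`, on which the terms of the series are interpolated. -/
def rightHalfPlane : Set ℂ := {z | 0 < z.re}

theorem isOpen_rightHalfPlane : IsOpen rightHalfPlane :=
  isOpen_lt continuous_const Complex.continuous_re

/-- A holomorphic function on the right half-plane that grows at most linearly, with constant `B`,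
to the right of the line `re z = 1 / 2`. This is the hypothesis under which the sequence
`g 1, g 2, …` has a convergent Euler transform. -/
structure LinearGrowth (g : ℂ → ℂ) (B : ℝ) : Prop where
  differentiableOn : DifferentiableOn ℂ g rightHalfPlane
  norm_le : ∀ z : ℂ, 1 / 2 ≤ z.re → ‖g z‖ ≤ B * ‖z‖

variable {g : ℂ → ℂ} {B : ℝ}

theorem LinearGrowth.mono (hg : LinearGrowth g B) {B' : ℝ} (h : B ≤ B') : LinearGrowth g B' :=
  ⟨hg.differentiableOn, fun z hz ↦ (hg.norm_le z hz).trans (by gcongr)⟩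

theorem LinearGrowth.nonneg (hg : LinearGrowth g B) : 0 ≤ B := by
  simpa using (norm_nonneg _).trans (hg.norm_le 1 (by norm_num))

/-- Cauchy's estimate on the disc of radius `y / 2`, on which `‖z‖ ≤ 3 * y / 2`. -/
theorem LinearGrowth.norm_iteratedDeriv_le (hg : LinearGrowth g B) (m : ℕ) {y : ℝ} (hy : 1 ≤ y) :
    ‖iteratedDeriv m g y‖ ≤ m.factorial * (B * (3 / 2 * y)) / (y / 2) ^ m := by
  have hre : ∀ z ∈ Metric.closedBall (y : ℂ) (y / 2), y / 2 ≤ z.re := by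
    intro z hz
    have hdist : |z.re - y| ≤ y / 2 := by
      simpa using (Complex.abs_re_le_norm (z - y)).trans (mem_closedBall_iff_norm.1 hz)
    linarith [(abs_le.1 hdist).1]
  refine Complex.norm_iteratedDeriv_le_of_forall_mem_sphere_norm_le m (by positivity) ?_ ?_
  · refine hg.differentiableOn.diffContOnCl_ball fun z hz ↦ ?_
    exact lt_of_lt_of_le (by positivity) (hre z hz)
  · intro z hz
    have hz' := Metric.sphere_subset_closedBall hz
    refine (hg.norm_le z (by linarith [hre z hz'])).trans ?_
    have hz_norm : ‖z‖ ≤ 3 / 2 * y := calc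
      ‖z‖ ≤ ‖(y : ℂ)‖ + ‖z - y‖ := norm_le_norm_add_norm_sub' z y
      _ ≤ y + y / 2 := by
        gcongr
        · simp [abs_of_nonneg (zero_le_one.trans hy)]
        · exact mem_closedBall_iff_norm.1 hz'
      _ = 3 / 2 * y := by ring
    gcongr
    exact hg.nonneg

theorem LinearGrowth.norm_fwdDiff_iter_le (hg : LinearGrowth g B) (m : ℕ) {x : ℝ} (hx : 1 ≤ x) :
    ‖(Δ_[1])^[m + 1] g x‖ ≤ 3 * (m + 1).factorial * 2 ^ m * B / x ^ m := by
  have hB := hg.nonneg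
  have key := norm_fwdDiff_iter_le_of_norm_iteratedDeriv_le (m + 1) isOpen_rightHalfPlane
    hg.differentiableOn (x := x) (h := 1) (B := 3 * (m + 1).factorial * 2 ^ m * B / x ^ m)
  simp only [mul_one, ← Complex.ofReal_add, norm_one, one_pow] at key
  refine key (fun t ht ↦ ?_) fun t ht ↦ ?_
  · rw [rightHalfPlane, Set.mem_ofPred_eq, Complex.ofReal_re]
    linarith [ht.1]
  · have hxt : 1 ≤ x + t := by linarith [ht.1]
    calc ‖iteratedDeriv (m + 1) g (x + t : ℝ)‖
        ≤ (m + 1).factorial * (B * (3 / 2 * (x + t))) / ((x + t) / 2) ^ (m + 1) :=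
          hg.norm_iteratedDeriv_le (m + 1) hxt
      _ = 3 * (m + 1).factorial * 2 ^ m * B / (x + t) ^ m := by
        have hpos : x + t ≠ 0 := by positivity
        rw [div_pow, pow_succ (x + t), pow_succ 2 m]
        field_simp
      _ ≤ 3 * (m + 1).factorial * 2 ^ m * B / x ^ m := by
        gcongr
        linarith [ht.1]

theorem fwdDiff_iter_comp_natCast_add_one {G : Type*} [AddCommGroup G] (f : ℂ → G) (m k : ℕ) :
    (Δ_[1])^[m] (fun j : ℕ ↦ f (j + 1)) k = (Δ_[1])^[m] f (k + 1) := by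
  simp only [fwdDiff_iter_eq_sum_shift]
  refine Finset.sum_congr rfl fun j _ ↦ ?_
  congr 2
  simp only [nsmul_eq_mul, Nat.cast_add, Nat.cast_id, mul_one]
  ring

theorem LinearGrowth.norm_fwdDiff_iter_natCast_le (hg : LinearGrowth g B) (m k : ℕ) :
    ‖(Δ_[1])^[m + 1] (fun j : ℕ ↦ g (j + 1)) k‖ ≤
      3 * (m + 1).factorial * 2 ^ m * B * (1 / (k + 1) ^ m) := by
  have hk := hg.norm_fwdDiff_iter_le m (x := k + 1) (by simp)
  rw [fwdDiff_iter_comp_natCast_add_one]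
  push_cast at hk
  rwa [mul_one_div]

theorem summable_one_div_natCast_add_one_pow {m : ℕ} (hm : 1 < m) :
    Summable fun k : ℕ ↦ 1 / ((k : ℝ) + 1) ^ m := by
  simpa using (summable_nat_add_iff 1).2 (Real.summable_one_div_nat_pow.2 hm)

end LinearGrowth

section Parameter

theorem differentiableOn_tsum_of_locally_summable_norm {ι E : Type*} [NormedAddCommGroup E]
    [NormedSpace ℂ E] [CompleteSpace E] {F : ι → ℂ → E} {U : Set ℂ} (hU : IsOpen U)
    (hF : ∀ i, DifferentiableOn ℂ (F i) U)
    (hbound : ∀ z ∈ U, ∃ u : ι → ℝ, Summable u ∧ ∀ᶠ w in 𝓝 z, ∀ i, ‖F i w‖ ≤ u i) :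
    DifferentiableOn ℂ (fun w ↦ ∑' i, F i w) U := by
  intro z hz
  obtain ⟨u, hu, hFu⟩ := hbound z hz
  obtain ⟨V, hV, hVopen, hzV⟩ := eventually_nhds_iff.1 (hFu.and (hU.mem_nhds hz))
  have hdiff : DifferentiableOn ℂ (fun w ↦ ∑' i, F i w) V :=
    Complex.differentiableOn_tsum_of_summable_norm hu
      (fun i ↦ (hF i).mono fun w hw ↦ (hV w hw).2) hVopen fun i w hw ↦ (hV w hw).1 i
  exact (hdiff.differentiableAt (hVopen.mem_nhds hzV)).differentiableWithinAt

variable {R : ℂ → ℂ → ℂ} {m : ℕ}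

theorem differentiableOn_eulerSum (hm : 1 < m) {U : Set ℂ} (hU : IsOpen U)
    (hdiff : ∀ k : ℕ, DifferentiableOn ℂ (fun s ↦ R s (k + 1)) U)
    (hgrowth : ∀ s₀ ∈ U, ∃ B, ∀ᶠ s in 𝓝 s₀, LinearGrowth (R s) B) :
    DifferentiableOn ℂ (fun s ↦ eulerSum (m + 1) fun k : ℕ ↦ R s (k + 1)) U := by
  have hΔ : ∀ j k : ℕ,
      DifferentiableOn ℂ (fun s ↦ (Δ_[1])^[j] (fun k : ℕ ↦ R s (k + 1)) k) U := by
    intro j k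
    simp only [fwdDiff_iter_eq_sum_shift]
    exact DifferentiableOn.fun_sum fun i _ ↦ (hdiff _).fun_const_smul _
  refine (DifferentiableOn.fun_sum fun j _ ↦ ((hΔ j 0).div_const 2).const_mul _).add
    (DifferentiableOn.const_mul ?_ _)
  refine differentiableOn_tsum_of_locally_summable_norm hU
    (fun k ↦ (hΔ (m + 1) k).const_mul _) fun s₀ hs₀ ↦ ?_
  obtain ⟨B, hB⟩ := hgrowth s₀ hs₀
  refine ⟨_, (summable_one_div_natCast_add_one_pow hm).mul_left (3 * (m + 1).factorial * 2 ^ m * B),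
    hB.mono fun s hs k ↦ ?_⟩
  simpa using hs.norm_fwdDiff_iter_natCast_le m k

theorem tendsto_eulerSum {ι : Type*} {l : Filter ι} {R : ι → ℂ → ℂ} {r : ℕ → ℂ} (hm : 1 < m)
    (hlim : ∀ k : ℕ, Tendsto (fun i ↦ R i (k + 1)) l (𝓝 (r k)))
    (hgrowth : ∃ B, ∀ᶠ i in l, LinearGrowth (R i) B) :
    Tendsto (fun i ↦ eulerSum (m + 1) fun k : ℕ ↦ R i (k + 1)) l (𝓝 (eulerSum (m + 1) r)) := by
  have hΔ := fun j k ↦ tendsto_fwdDiff_iter (f := fun i (k : ℕ) ↦ R i (k + 1)) hlim 1 j k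
  refine (tendsto_finsetSum _ fun j _ ↦ ((hΔ j 0).div_const 2).const_mul _).add
    (Tendsto.const_mul _ ?_)
  obtain ⟨B, hB⟩ := hgrowth
  refine tendsto_tsum_of_dominated_convergence
    ((summable_one_div_natCast_add_one_pow hm).mul_left (3 * (m + 1).factorial * 2 ^ m * B))
    (fun k ↦ (hΔ (m + 1) k).const_mul _) (hB.mono fun i hi k ↦ ?_)
  simpa using hi.norm_fwdDiff_iter_natCast_le m k

end Parameter

section ExpLog

theorem norm_exp_sub_one_le_of_re_le {w : ℂ} {B : ℝ} (hw : w.re ≤ B) (hB : 0 ≤ B) :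
    ‖Complex.exp w - 1‖ ≤ Real.exp B * ‖w‖ := by
  have hmvt := (convex_halfSpace_re_le B).norm_image_sub_le_of_norm_deriv_le (𝕜 := ℂ)
    (f := Complex.exp) (C := Real.exp B) (fun z _ ↦ Complex.differentiableAt_exp)
    (fun z hz ↦ by simpa [Complex.norm_exp] using hz) (x := 0) (y := w) hB hw
  simpa using hmvt

theorem one_add_mem_slitPlane {z : ℂ} (hz : 0 ≤ z.re) : 1 + z ∈ Complex.slitPlane :=
  Complex.mem_slitPlane_iff.2 (.inl (by simpa using by linarith))

theorem one_le_norm_one_add {z : ℂ} (hz : 0 ≤ z.re) : 1 ≤ ‖1 + z‖ := by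
  refine le_trans ?_ (Complex.re_le_norm (1 + z))
  simpa using hz

theorem norm_log_one_add_le_of_re_nonneg {z : ℂ} (hz : 0 ≤ z.re) :
    ‖Complex.log (1 + z)‖ ≤ ‖z‖ := by
  have hderiv (w : ℂ) (hw : 0 ≤ w.re) :
      HasDerivWithinAt (fun w ↦ Complex.log (1 + w)) (1 / (1 + w)) {w | 0 ≤ w.re} w :=
    (((hasDerivAt_id w).const_add 1).clog (one_add_mem_slitPlane hw)).hasDerivWithinAt
  have hmvt := (convex_halfSpace_re_ge 0).norm_image_sub_le_of_norm_hasDerivWithin_le (C := 1)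
    hderiv (fun w hw ↦ by simpa using inv_le_one_of_one_le₀ (one_le_norm_one_add hw))
    (x := 0) (le_refl (0 : ℂ).re) hz
  simpa using hmvt

theorem norm_log_one_add_sub_self_le_of_re_nonneg {z : ℂ} (hz : 0 ≤ z.re) :
    ‖Complex.log (1 + z) - z‖ ≤ ‖z‖ ^ 2 := by
  let D : Set ℂ := {w | 0 ≤ w.re} ∩ Metric.closedBall 0 ‖z‖
  have hderiv (w : ℂ) (hw : w ∈ D) :
      HasDerivWithinAt (fun w ↦ Complex.log (1 + w) - w) (1 / (1 + w) - 1) D w :=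
    ((((hasDerivAt_id w).const_add 1).clog (one_add_mem_slitPlane hw.1)).sub
      (hasDerivAt_id w)).hasDerivWithinAt
  have hbound (w : ℂ) (hw : w ∈ D) : ‖1 / (1 + w) - 1‖ ≤ ‖z‖ := by
    have hne : 1 + w ≠ 0 := Complex.slitPlane_ne_zero (one_add_mem_slitPlane hw.1)
    calc ‖1 / (1 + w) - 1‖ = ‖w‖ / ‖1 + w‖ := by
          rw [div_sub_one hne, norm_div, sub_add_cancel_left, norm_neg]
      _ ≤ ‖w‖ := div_le_self (norm_nonneg w) (one_le_norm_one_add hw.1)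
      _ ≤ ‖z‖ := mem_closedBall_zero_iff.1 hw.2
  have hD : Convex ℝ D := (convex_halfSpace_re_ge 0).inter (convex_closedBall 0 ‖z‖)
  have hmvt := hD.norm_image_sub_le_of_norm_hasDerivWithin_le hderiv hbound
    (x := 0) (y := z) (by simp [D]) (by simpa [D] using hz)
  simpa [sq] using hmvt

end ExpLog

section PowerSums

theorem natCast_add_one_ne_zero (n : ℕ) : (n : ℂ) + 1 ≠ 0 := n.cast_add_one_ne_zero

theorem norm_natCast_add_one (n : ℕ) : ‖(n : ℂ) + 1‖ = n + 1 := by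
  simpa using Complex.norm_natCast (n + 1)

theorem norm_natCast_add_one_cpow (s : ℂ) (n : ℕ) :
    ‖((n : ℂ) + 1) ^ s‖ = ((n : ℝ) + 1) ^ s.re := by
  simpa using Complex.norm_natCast_cpow_of_pos n.succ_pos s

theorem summable_natCast_add_one_rpow {σ : ℝ} (hσ : 1 < σ) :
    Summable fun n : ℕ ↦ ((n : ℝ) + 1) ^ (-σ) := by
  simpa using (summable_nat_add_iff 1).2 (Real.summable_nat_rpow.2 (neg_lt_neg hσ))

theorem summable_natCast_add_one_cpow {s : ℂ} (hs : 1 < s.re) :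
    Summable fun n : ℕ ↦ ((n : ℂ) + 1) ^ (-s) := by
  refine .of_norm ?_
  simpa only [norm_natCast_add_one_cpow, Complex.neg_re] using summable_natCast_add_one_rpow hs

theorem tsum_natCast_add_one_cpow {s : ℂ} (hs : 1 < s.re) :
    ∑' n : ℕ, ((n : ℂ) + 1) ^ (-s) = riemannZeta s := by
  simp only [zeta_eq_tsum_one_div_nat_add_one_cpow hs, Complex.cpow_neg, one_div]

theorem tsum_natCast_add_one_rpow {σ : ℝ} (hσ : 1 < σ) :
    ∑' n : ℕ, ((n : ℝ) + 1) ^ (-σ) = ‖riemannZeta σ‖ := by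
  have hofReal : riemannZeta σ = (∑' n : ℕ, ((n : ℝ) + 1) ^ (-σ) : ℝ) := by
    rw [← tsum_natCast_add_one_cpow (by simpa using hσ), Complex.ofReal_tsum]
    refine tsum_congr fun n ↦ ?_
    rw [Complex.ofReal_cpow (by positivity)]
    push_cast
    rfl
  rw [hofReal, Complex.norm_of_nonneg (tsum_nonneg fun n ↦ by positivity)]

theorem tendsto_mul_riemannZeta_one_add_mul {c : ℝ} (hc : 0 < c) :
    Tendsto (fun t : ℝ ↦ t * riemannZeta (1 + c * t)) (𝓝[>] 0) (𝓝 (1 / c)) := by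
  have hpole : Tendsto (fun t : ℝ ↦ 1 + (c : ℂ) * t) (𝓝[>] 0) (𝓝[≠] 1) := by
    refine tendsto_nhdsWithin_iff.2 ⟨?_, ?_⟩
    · refine Tendsto.mono_left ?_ nhdsWithin_le_nhds
      exact Continuous.tendsto' (by fun_prop) _ _ (by simp)
    · filter_upwards [self_mem_nhdsWithin] with t ht
      simpa using ⟨hc.ne', (show (0 : ℝ) < t from ht).ne'⟩
  have hc' : (c : ℂ) ≠ 0 := by exact_mod_cast hc.ne'
  refine ((riemannZeta_residue_one.comp hpole).div_const (c : ℂ)).congr fun t ↦ ?_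
  simp only [Function.comp_apply, add_sub_cancel_left]
  field_simp

end PowerSums

section Rows

variable {a b : ℝ}

/-- The principal branch of `log ((1 + a * y) * (1 + b * y))` on the right half-plane. -/
noncomputable def logProd (a b : ℝ) (y : ℂ) : ℂ := Complex.log (1 + a * y) + Complex.log (1 + b * y)

theorem re_ofReal_mul_nonneg (ha : 0 ≤ a) {y : ℂ} (hy : 0 ≤ y.re) : 0 ≤ (a * y).re := by
  rw [Complex.re_ofReal_mul]
  exact mul_nonneg ha hy

theorem differentiableAt_logProd (ha : 0 ≤ a) (hb : 0 ≤ b) {y : ℂ} (hy : 0 ≤ y.re) :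
    DifferentiableAt ℂ (logProd a b) y := by
  have hfactor {c : ℝ} (hc : 0 ≤ c) : DifferentiableAt ℂ (fun y ↦ Complex.log (1 + c * y)) y :=
    DifferentiableAt.clog (by fun_prop) (one_add_mem_slitPlane (re_ofReal_mul_nonneg hc hy))
  exact (hfactor ha).add (hfactor hb)

theorem norm_logProd_le (ha : 0 ≤ a) (hb : 0 ≤ b) {y : ℂ} (hy : 0 ≤ y.re) :
    ‖logProd a b y‖ ≤ (a + b) * ‖y‖ := by
  have hfactor {c : ℝ} (hc : 0 ≤ c) : ‖Complex.log (1 + c * y)‖ ≤ c * ‖y‖ := by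
    simpa [abs_of_nonneg hc] using
      norm_log_one_add_le_of_re_nonneg (re_ofReal_mul_nonneg hc hy)
  rw [add_mul]
  exact norm_add_le_of_le (hfactor ha) (hfactor hb)

theorem norm_logProd_sub_le (ha : 0 ≤ a) (hb : 0 ≤ b) {y : ℂ} (hy : 0 ≤ y.re) :
    ‖logProd a b y - (a + b) * y‖ ≤ ((a + b) * ‖y‖) ^ 2 := by
  have hfactor {c : ℝ} (hc : 0 ≤ c) : ‖Complex.log (1 + c * y) - c * y‖ ≤ (c * ‖y‖) ^ 2 := by
    simpa [abs_of_nonneg hc] using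
      norm_log_one_add_sub_self_le_of_re_nonneg (re_ofReal_mul_nonneg hc hy)
  calc ‖logProd a b y - (a + b) * y‖
      = ‖(Complex.log (1 + a * y) - a * y) + (Complex.log (1 + b * y) - b * y)‖ := by
        rw [logProd]
        ring_nf
    _ ≤ (a * ‖y‖) ^ 2 + (b * ‖y‖) ^ 2 := norm_add_le_of_le (hfactor ha) (hfactor hb)
    _ ≤ ((a + b) * ‖y‖) ^ 2 := by
        have hcross : 0 ≤ a * b * ‖y‖ ^ 2 := by positivity
        linarith

theorem re_neg_mul_logProd_le (ha : 0 ≤ a) (hb : 0 ≤ b) {s : ℂ} (hs : 0 ≤ s.re) {y : ℂ}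
    (hy : 0 ≤ y.re) : (-s * logProd a b y).re ≤ 2 * Real.pi * |s.im| := by
  have hfactor {c : ℝ} (hc : 0 ≤ c) :
      (-s * Complex.log (1 + c * y)).re ≤ Real.pi * |s.im| := by
    have hre : 0 ≤ (Complex.log (1 + c * y)).re := by
      rw [Complex.log_re]
      exact Real.log_nonneg (one_le_norm_one_add (re_ofReal_mul_nonneg hc hy))
    have him : |s.im * (Complex.log (1 + c * y)).im| ≤ Real.pi * |s.im| := by
      rw [abs_mul, mul_comm, Complex.log_im]
      gcongr
      exact Complex.abs_arg_le_pi _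
    rw [Complex.mul_re, Complex.neg_re, Complex.neg_im]
    linarith [mul_nonneg hs hre, le_abs_self (s.im * (Complex.log (1 + c * y)).im)]
  rw [logProd, mul_add, Complex.add_re]
  linarith [hfactor ha, hfactor hb]

/-- The amount by which the `n`-th term `(n + 1) ^ (-3 s) * ((1 + a y) * (1 + b y)) ^ (-s)`,
`y = x / (n + 1)`, of a row of the double series exceeds its value for `a = b = 0`. -/
noncomputable def rowTerm (a b : ℝ) (s x : ℂ) (n : ℕ) : ℂ :=
  ((n : ℂ) + 1) ^ (-(3 * s)) * (Complex.exp (-s * logProd a b (x / (n + 1))) - 1)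

/-- The constant in the estimate `norm_rowTerm_le`. -/
noncomputable def rowTermBound (a b : ℝ) (s : ℂ) : ℝ :=
  Real.exp (2 * Real.pi * |s.im|) * ‖s‖ * (a + b)

theorem continuous_rowTermBound : Continuous (rowTermBound a b) := by
  unfold rowTermBound
  fun_prop

theorem div_natCast_add_one_re_nonneg {x : ℂ} (hx : 0 ≤ x.re) (n : ℕ) :
    0 ≤ (x / (n + 1)).re := by
  rw [← Nat.cast_add_one, Complex.div_natCast_re]
  positivity

theorem norm_div_natCast_add_one (x : ℂ) (n : ℕ) : ‖x / (n + 1)‖ = ‖x‖ / (n + 1) := by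
  rw [norm_div, norm_natCast_add_one]

theorem rowTermBound_nonneg (ha : 0 ≤ a) (hb : 0 ≤ b) (s : ℂ) : 0 ≤ rowTermBound a b s := by
  unfold rowTermBound
  positivity

theorem norm_rowTerm_le (ha : 0 ≤ a) (hb : 0 ≤ b) {s x : ℂ} (hs : 0 ≤ s.re) (hx : 0 ≤ x.re)
    (n : ℕ) :
    ‖rowTerm a b s x n‖ ≤ rowTermBound a b s * ‖x‖ * ((n : ℝ) + 1) ^ (-(1 + 3 * s.re)) := by
  have hy := div_natCast_add_one_re_nonneg hx n
  have hexp : ‖Complex.exp (-s * logProd a b (x / (n + 1))) - 1‖ ≤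
      rowTermBound a b s * (‖x‖ / (n + 1)) := calc
    _ ≤ Real.exp (2 * Real.pi * |s.im|) * ‖-s * logProd a b (x / (n + 1))‖ :=
      norm_exp_sub_one_le_of_re_le (re_neg_mul_logProd_le ha hb hs hy) (by positivity)
    _ ≤ Real.exp (2 * Real.pi * |s.im|) * (‖s‖ * ((a + b) * (‖x‖ / (n + 1)))) := by
      rw [norm_mul, norm_neg, ← norm_div_natCast_add_one]
      gcongr
      exact norm_logProd_le ha hb hy
    _ = rowTermBound a b s * (‖x‖ / (n + 1)) := by
      rw [rowTermBound]
      ring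
  have hre : (-(3 * s)).re = -(3 * s.re) := by simp
  calc ‖rowTerm a b s x n‖
      ≤ ((n : ℝ) + 1) ^ (-(3 * s.re)) * (rowTermBound a b s * (‖x‖ / (n + 1))) := by
        rw [rowTerm, norm_mul, norm_natCast_add_one_cpow, hre]
        gcongr
    _ = rowTermBound a b s * ‖x‖ * ((n : ℝ) + 1) ^ (-(1 + 3 * s.re)) := by
        have hn : (0 : ℝ) < n + 1 := by positivity
        rw [neg_add, Real.rpow_add hn, Real.rpow_neg_one]
        ring

/-- The sum of the `rowTerm`s, which converges absolutely already for `0 < re s`. -/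
noncomputable def rowCorrection (a b : ℝ) (s x : ℂ) : ℂ := ∑' n, rowTerm a b s x n

theorem summable_rowTerm (ha : 0 ≤ a) (hb : 0 ≤ b) {s x : ℂ} (hs : 0 < s.re) (hx : 0 ≤ x.re) :
    Summable (rowTerm a b s x) :=
  .of_norm_bounded ((summable_natCast_add_one_rpow (by linarith)).mul_left _)
    (norm_rowTerm_le ha hb hs.le hx)

theorem norm_rowCorrection_le (ha : 0 ≤ a) (hb : 0 ≤ b) {s x : ℂ} (hs : 0 < s.re)
    (hx : 0 ≤ x.re) :
    ‖rowCorrection a b s x‖ ≤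
      rowTermBound a b s * ‖x‖ * ‖riemannZeta (1 + 3 * s.re : ℝ)‖ := by
  have hσ : 1 < 1 + 3 * s.re := by linarith
  rw [← tsum_natCast_add_one_rpow hσ, ← tsum_mul_left]
  exact tsum_of_norm_bounded ((summable_natCast_add_one_rpow hσ).mul_left _).hasSum
    (norm_rowTerm_le ha hb hs.le hx)

theorem rowTerm_differentiable_left (x : ℂ) (n : ℕ) :
    Differentiable ℂ fun s ↦ rowTerm a b s x n := by
  have hn := natCast_add_one_ne_zero n
  unfold rowTerm
  fun_prop (disch := simp [hn])

theorem differentiableOn_rowTerm_right (ha : 0 ≤ a) (hb : 0 ≤ b) (s : ℂ) (n : ℕ) :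
    DifferentiableOn ℂ (fun x ↦ rowTerm a b s x n) rightHalfPlane := by
  intro x hx
  have hlog : DifferentiableAt ℂ (fun x : ℂ ↦ logProd a b (x / (n + 1))) x :=
    DifferentiableAt.comp (g := logProd a b) x
      (differentiableAt_logProd ha hb (div_natCast_add_one_re_nonneg (le_of_lt hx) n))
      (differentiableAt_id.div_const _)
  exact (((hlog.const_mul _).cexp.sub_const 1).const_mul _).differentiableWithinAt

theorem differentiableOn_rowCorrection_left (ha : 0 ≤ a) (hb : 0 ≤ b) {x : ℂ} (hx : 0 ≤ x.re) :
    DifferentiableOn ℂ (fun s ↦ rowCorrection a b s x) rightHalfPlane := by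
  refine differentiableOn_tsum_of_locally_summable_norm isOpen_rightHalfPlane
    (fun n ↦ (rowTerm_differentiable_left x n).differentiableOn) fun s₀ (hs₀ : 0 < s₀.re) ↦ ?_
  refine ⟨_, (summable_natCast_add_one_rpow (σ := 1 + 3 * (s₀.re / 2)) (by linarith)).mul_left
    ((rowTermBound a b s₀ + 1) * ‖x‖), ?_⟩
  filter_upwards [continuous_rowTermBound.continuousAt.eventually_lt_const (lt_add_one _),
    Complex.continuous_re.continuousAt.eventually_const_lt (half_lt_self hs₀)] with s hbound hs n
  refine (norm_rowTerm_le ha hb (by linarith) hx n).trans ?_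
  have hbound₀ := rowTermBound_nonneg ha hb s₀
  gcongr
  simp

theorem differentiableOn_rowCorrection_right (ha : 0 ≤ a) (hb : 0 ≤ b) {s : ℂ} (hs : 0 < s.re) :
    DifferentiableOn ℂ (rowCorrection a b s) rightHalfPlane := by
  refine differentiableOn_tsum_of_locally_summable_norm isOpen_rightHalfPlane
    (differentiableOn_rowTerm_right ha hb s) fun x₀ hx₀ ↦ ?_
  refine ⟨_, (summable_natCast_add_one_rpow (σ := 1 + 3 * s.re) (by linarith)).mul_left
    (rowTermBound a b s * (‖x₀‖ + 1)), ?_⟩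
  filter_upwards [continuous_norm.continuousAt.eventually_lt_const (lt_add_one _),
    isOpen_rightHalfPlane.mem_nhds hx₀] with x hbound hx n
  refine (norm_rowTerm_le ha hb hs.le (le_of_lt hx) n).trans ?_
  have hbound₀ := rowTermBound_nonneg ha hb s
  gcongr

end Rows

section RowContinuation

variable {a b : ℝ}

/-- The analytic continuation in `s` of the row sum
`∑ n ≥ 1, (x * n * (n + a * x) * (n + b * x)) ^ (-s)` to `0 < re s`, with a pole at `1 / 3`. -/
noncomputable def rowContinuation (a b : ℝ) (s x : ℂ) : ℂ :=
  x ^ (-s) * (riemannZeta (3 * s) + rowCorrection a b s x)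

/-- The region `{s | 0 < re s, s ≠ 1 / 3}`, where `riemannZeta (3 * s)` is holomorphic. -/
def rowDomain : Set ℂ := {s | 0 < s.re ∧ s ≠ 1 / 3}

theorem isOpen_rowDomain : IsOpen rowDomain :=
  isOpen_rightHalfPlane.inter isOpen_ne

theorem differentiableAt_riemannZeta_three_mul {s : ℂ} (hs : s ≠ 1 / 3) :
    DifferentiableAt ℂ (fun s ↦ riemannZeta (3 * s)) s := by
  refine DifferentiableAt.comp (g := riemannZeta) s (differentiableAt_riemannZeta fun h ↦ hs ?_)
    (by fun_prop)
  linear_combination h / 3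

theorem differentiableOn_rowContinuation_left (ha : 0 ≤ a) (hb : 0 ≤ b) {x : ℂ} (hx : 0 < x.re) :
    DifferentiableOn ℂ (fun s ↦ rowContinuation a b s x) rowDomain := by
  have hx₀ : x ≠ 0 := Complex.ne_zero_of_re_pos hx
  refine DifferentiableOn.mul (fun s _ ↦ ?_) (DifferentiableOn.add (fun s hs ↦ ?_) ?_)
  · exact (DifferentiableAt.const_cpow (by fun_prop) (.inl hx₀)).differentiableWithinAt
  · exact (differentiableAt_riemannZeta_three_mul hs.2).differentiableWithinAt
  · exact (differentiableOn_rowCorrection_left ha hb hx.le).mono fun s hs ↦ hs.1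

theorem differentiableOn_rowContinuation_right (ha : 0 ≤ a) (hb : 0 ≤ b) {s : ℂ} (hs : 0 < s.re) :
    DifferentiableOn ℂ (rowContinuation a b s) rightHalfPlane := by
  refine DifferentiableOn.mul (fun x hx ↦ ?_)
    ((differentiableOn_rowCorrection_right ha hb hs).const_add _)
  exact (differentiableAt_id.cpow_const (Complex.mem_slitPlane_iff.2 (.inl hx)))
    |>.differentiableWithinAt

theorem norm_cpow_neg_le {s x : ℂ} (hs : 0 ≤ s.re) (hx : 1 / 2 ≤ x.re) :
    ‖x ^ (-s)‖ ≤ 2 ^ s.re * Real.exp (Real.pi * |s.im|) := by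
  have hx₀ : x ≠ 0 := Complex.ne_zero_of_re_pos (by linarith)
  have hnorm : ‖x‖ ^ (-s.re) ≤ 2 ^ s.re := by
    rw [← inv_inv (2 : ℝ), Real.inv_rpow (by norm_num), ← Real.rpow_neg (by norm_num)]
    exact Real.rpow_le_rpow_of_nonpos (by norm_num)
      (by linarith [Complex.re_le_norm x]) (by linarith)
  have harg : x.arg * s.im ≤ Real.pi * |s.im| := by
    refine (le_abs_self _).trans ?_
    rw [abs_mul]
    gcongr
    exact Complex.abs_arg_le_pi x
  rw [Complex.norm_cpow_of_ne_zero hx₀, Complex.neg_re, Complex.neg_im, mul_neg, Real.exp_neg,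
    div_inv_eq_mul]
  gcongr

/-- The linear growth constant of `rowContinuation a b s`. -/
noncomputable def rowGrowth (a b : ℝ) (s : ℂ) : ℝ :=
  2 ^ s.re * Real.exp (Real.pi * |s.im|) *
    (2 * ‖riemannZeta (3 * s)‖ + rowTermBound a b s * ‖riemannZeta (1 + 3 * s.re : ℝ)‖)

theorem linearGrowth_rowContinuation (ha : 0 ≤ a) (hb : 0 ≤ b) {s : ℂ} (hs : 0 < s.re) :
    LinearGrowth (rowContinuation a b s) (rowGrowth a b s) where
  differentiableOn := differentiableOn_rowContinuation_right ha hb hs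
  norm_le x hx := by
    have hx_norm : 1 ≤ 2 * ‖x‖ := by linarith [Complex.re_le_norm x]
    calc ‖rowContinuation a b s x‖
        ≤ 2 ^ s.re * Real.exp (Real.pi * |s.im|) * (‖riemannZeta (3 * s)‖ * (2 * ‖x‖) +
            rowTermBound a b s * ‖x‖ * ‖riemannZeta (1 + 3 * s.re : ℝ)‖) := by
          rw [rowContinuation, norm_mul]
          gcongr
          · exact norm_cpow_neg_le hs.le hx
          · refine norm_add_le_of_le (le_mul_of_one_le_right (norm_nonneg _) hx_norm) ?_
            exact norm_rowCorrection_le ha hb hs (by linarith)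
      _ = rowGrowth a b s * ‖x‖ := by
          rw [rowGrowth]
          ring

theorem exists_eventually_linearGrowth_of_tendsto {ι : Type*} {l : Filter ι} {s : ι → ℂ} {M : ℝ}
    (ha : 0 ≤ a) (hb : 0 ≤ b) (hs : ∀ᶠ i in l, 0 < (s i).re)
    (hM : Tendsto (fun i ↦ rowGrowth a b (s i)) l (𝓝 M)) :
    ∃ B, ∀ᶠ i in l, LinearGrowth (rowContinuation a b (s i)) B := by
  refine ⟨M + 1, ?_⟩
  filter_upwards [hs, hM.eventually_le_const (lt_add_one M)] with i hi hMi
  exact (linearGrowth_rowContinuation ha hb hi).mono hMi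

theorem continuousAt_rowGrowth {s : ℂ} (hs : s ∈ rowDomain) : ContinuousAt (rowGrowth a b) s := by
  have hone : ((1 + 3 * s.re : ℝ) : ℂ) ≠ 1 := by
    simpa using (show 0 < s.re from hs.1).ne'
  have hzeta₁ : ContinuousAt (fun s : ℂ ↦ riemannZeta (1 + 3 * s.re : ℝ)) s :=
    ContinuousAt.comp (g := riemannZeta) (differentiableAt_riemannZeta hone).continuousAt
      (by fun_prop)
  have hzeta₃ := (differentiableAt_riemannZeta_three_mul hs.2).continuousAt
  have hpow : ContinuousAt (fun s : ℂ ↦ (2 : ℝ) ^ s.re * Real.exp (Real.pi * |s.im|)) s := by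
    fun_prop (disch := norm_num)
  exact hpow.mul ((hzeta₃.norm.const_mul 2).add
    (continuous_rowTermBound.continuousAt.mul hzeta₁.norm))

theorem tendsto_riemannZeta_three_mul :
    Tendsto (fun t : ℝ ↦ riemannZeta (3 * t)) (𝓝[>] 0) (𝓝 (-1 / 2)) := by
  have hcont : ContinuousAt (fun t : ℝ ↦ riemannZeta (3 * t)) 0 :=
    ContinuousAt.comp (g := fun s : ℂ ↦ riemannZeta (3 * s)) (x := (0 : ℝ))
      (differentiableAt_riemannZeta_three_mul (by norm_num)).continuousAt (by fun_prop)
  simpa [riemannZeta_zero] using hcont.tendsto.mono_left nhdsWithin_le_nhds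

theorem exists_tendsto_rowGrowth_ofReal (a b : ℝ) :
    ∃ M, Tendsto (fun t : ℝ ↦ rowGrowth a b t) (𝓝[>] 0) (𝓝 M) := by
  have hpow : Tendsto (fun t : ℝ ↦ (2 : ℝ) ^ t) (𝓝[>] 0) (𝓝 1) :=
    tendsto_nhdsWithin_of_tendsto_nhds
      (Continuous.tendsto' (by fun_prop (disch := norm_num)) _ _ (by simp))
  have hpole := (tendsto_mul_riemannZeta_one_add_mul three_pos).norm
  have hlim := hpow.mul (((tendsto_riemannZeta_three_mul.norm).const_mul 2).add
    (hpole.mul_const (a + b)))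
  refine ⟨_, hlim.congr fun t ↦ ?_⟩
  simp only [rowGrowth, rowTermBound, Complex.ofReal_re, Complex.ofReal_im, abs_zero, mul_zero,
    Real.exp_zero, norm_mul]
  push_cast
  ring

theorem norm_exp_neg_mul_logProd_sub_le (ha : 0 ≤ a) (hb : 0 ≤ b) {y : ℂ} (hy : 0 ≤ y.re) {t : ℝ}
    (ht : t ∈ Set.Icc 0 1) (hty : t * ((a + b) * ‖y‖) ≤ 1) :
    ‖Complex.exp (-t * logProd a b y) - 1 + t * (a + b) * y‖ ≤ 2 * t * ((a + b) * ‖y‖) ^ 2 := by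
  obtain ⟨ht₀, ht₁⟩ := ht
  set w := -t * logProd a b y with hw
  have hw_norm : ‖w‖ ≤ t * ((a + b) * ‖y‖) := by
    rw [hw, norm_mul, norm_neg, Complex.norm_of_nonneg ht₀]
    gcongr
    exact norm_logProd_le ha hb hy
  have hexp : ‖Complex.exp w - 1 - w‖ ≤ t * ((a + b) * ‖y‖) ^ 2 := calc
    _ ≤ ‖w‖ ^ 2 := Complex.norm_exp_sub_one_sub_id_le (hw_norm.trans hty)
    _ ≤ (t * ((a + b) * ‖y‖)) ^ 2 := by gcongr
    _ = t * (t * ((a + b) * ‖y‖) ^ 2) := by ring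
    _ ≤ t * ((a + b) * ‖y‖) ^ 2 := by
      gcongr
      exact mul_le_of_le_one_left (sq_nonneg _) ht₁
  have hlog : ‖w + t * (a + b) * y‖ ≤ t * ((a + b) * ‖y‖) ^ 2 := calc
    _ = ‖-t * (logProd a b y - (a + b) * y)‖ := by
      rw [hw]
      ring_nf
    _ ≤ t * ((a + b) * ‖y‖) ^ 2 := by
      rw [norm_mul, norm_neg, Complex.norm_of_nonneg ht₀]
      gcongr
      exact norm_logProd_sub_le ha hb hy
  calc _ = ‖(Complex.exp w - 1 - w) + (w + t * (a + b) * y)‖ := by ring_nf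
    _ ≤ 2 * t * ((a + b) * ‖y‖) ^ 2 := by linarith [norm_add_le_of_le hexp hlog]

theorem norm_rowTerm_add_le (ha : 0 ≤ a) (hb : 0 ≤ b) {x : ℂ} (hx : 0 ≤ x.re) {t : ℝ}
    (ht : t ∈ Set.Icc 0 1) (htx : t * ((a + b) * ‖x‖) ≤ 1) (n : ℕ) :
    ‖rowTerm a b t x n + t * (a + b) * x * ((n : ℂ) + 1) ^ (-(1 + 3 * t : ℂ))‖ ≤
      2 * t * ((a + b) * ‖x‖) ^ 2 * ((n : ℝ) + 1) ^ (-2 : ℝ) := by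
  have ht₀ := ht.1
  have hn : (n : ℂ) + 1 ≠ 0 := natCast_add_one_ne_zero n
  have hy_norm : ‖x / (n + 1)‖ ≤ ‖x‖ := by
    rw [norm_div_natCast_add_one]
    exact div_le_self (norm_nonneg x) (by simp)
  have hpow : ‖((n : ℂ) + 1) ^ (-(3 * t : ℂ))‖ ≤ 1 := by
    rw [norm_natCast_add_one_cpow]
    exact Real.rpow_le_one_of_one_le_of_nonpos (by simp) (by simpa using ht₀)
  calc _ = ‖((n : ℂ) + 1) ^ (-(3 * t : ℂ)) * (Complex.exp (-t * logProd a b (x / (n + 1))) - 1 +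
          t * (a + b) * (x / (n + 1)))‖ := by
        rw [rowTerm, neg_add, Complex.cpow_add _ _ hn, Complex.cpow_neg_one]
        ring_nf
    _ ≤ 1 * (2 * t * ((a + b) * ‖x / (n + 1)‖) ^ 2) := by
        rw [norm_mul]
        gcongr
        exact norm_exp_neg_mul_logProd_sub_le ha hb (div_natCast_add_one_re_nonneg hx n) ht
          (le_trans (by gcongr) htx)
    _ = 2 * t * ((a + b) * ‖x‖) ^ 2 * ((n : ℝ) + 1) ^ (-2 : ℝ) := by
        rw [norm_div_natCast_add_one, Real.rpow_neg (by positivity), Real.rpow_two]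
        field_simp

theorem norm_rowCorrection_add_le (ha : 0 ≤ a) (hb : 0 ≤ b) {x : ℂ} (hx : 0 ≤ x.re) {t : ℝ}
    (ht : t ∈ Set.Ioc 0 1) (htx : t * ((a + b) * ‖x‖) ≤ 1) :
    ‖rowCorrection a b t x + (a + b) * x * (t * riemannZeta (1 + 3 * t))‖ ≤
      2 * t * ((a + b) * ‖x‖) ^ 2 * ‖riemannZeta (2 : ℝ)‖ := by
  have hre : 1 < (1 + 3 * t : ℂ).re := by simpa using ht.1
  have hsum : rowCorrection a b t x + (a + b) * x * (t * riemannZeta (1 + 3 * t)) =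
      ∑' n : ℕ, (rowTerm a b t x n + t * (a + b) * x * ((n : ℂ) + 1) ^ (-(1 + 3 * t : ℂ))) := by
    rw [(summable_rowTerm ha hb (by simpa using ht.1) hx).tsum_add
      ((summable_natCast_add_one_cpow hre).mul_left _), tsum_mul_left,
      tsum_natCast_add_one_cpow hre, rowCorrection]
    ring
  rw [hsum, ← tsum_natCast_add_one_rpow one_lt_two, ← tsum_mul_left]
  exact tsum_of_norm_bounded ((summable_natCast_add_one_rpow one_lt_two).mul_left _).hasSum
    (norm_rowTerm_add_le ha hb hx ⟨ht.1.le, ht.2⟩ htx)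

theorem tendsto_rowCorrection (ha : 0 ≤ a) (hb : 0 ≤ b) {x : ℂ} (hx : 0 ≤ x.re) :
    Tendsto (fun t : ℝ ↦ rowCorrection a b t x) (𝓝[>] 0) (𝓝 (-((a + b) * x / 3))) := by
  have hsmall : Tendsto (fun t : ℝ ↦ 2 * t * ((a + b) * ‖x‖) ^ 2 * ‖riemannZeta (2 : ℝ)‖)
      (𝓝[>] 0) (𝓝 0) :=
    tendsto_nhdsWithin_of_tendsto_nhds (Continuous.tendsto' (by fun_prop) _ _ (by simp))
  have hpole : Tendsto (fun t : ℝ ↦ (a + b) * x * (t * riemannZeta (1 + 3 * t))) (𝓝[>] 0)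
      (𝓝 ((a + b) * x / 3)) := by
    simpa [div_eq_mul_inv] using
      (tendsto_mul_riemannZeta_one_add_mul three_pos).const_mul ((a + b) * x)
  have herror : Tendsto
      (fun t : ℝ ↦ rowCorrection a b t x + (a + b) * x * (t * riemannZeta (1 + 3 * t)))
      (𝓝[>] 0) (𝓝 0) := by
    refine squeeze_zero_norm' ?_ hsmall
    have htx : Tendsto (fun t : ℝ ↦ t * ((a + b) * ‖x‖)) (𝓝[>] 0) (𝓝 0) :=
      tendsto_nhdsWithin_of_tendsto_nhds (Continuous.tendsto' (by fun_prop) _ _ (zero_mul _))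
    filter_upwards [htx.eventually_le_const one_pos, Ioc_mem_nhdsGT one_pos] with t htx ht
    exact norm_rowCorrection_add_le ha hb hx ht htx
  simpa using herror.sub hpole

theorem tendsto_const_cpow_one {c : ℂ} (hc : c ≠ 0) {f : ℝ → ℂ} (hf : Continuous f)
    (hf₀ : f 0 = 0) : Tendsto (fun t ↦ c ^ f t) (𝓝[>] 0) (𝓝 1) :=
  tendsto_nhdsWithin_of_tendsto_nhds ((hf.const_cpow (.inl hc)).tendsto' _ _ (by simp [hf₀]))

theorem tendsto_rowContinuation (ha : 0 ≤ a) (hb : 0 ≤ b) {x : ℂ} (hx : 0 < x.re) :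
    Tendsto (fun t : ℝ ↦ rowContinuation a b t x) (𝓝[>] 0) (𝓝 (-1 / 2 - (a + b) * x / 3)) := by
  have hpow : Tendsto (fun t : ℝ ↦ x ^ (-t : ℂ)) (𝓝[>] 0) (𝓝 1) :=
    tendsto_const_cpow_one (Complex.ne_zero_of_re_pos hx) (by fun_prop) (by simp)
  simpa [rowContinuation, sub_eq_add_neg] using
    hpow.mul (tendsto_riemannZeta_three_mul.add (tendsto_rowCorrection ha hb hx.le))

end RowContinuation

section AlternatingZeta

variable {a b : ℝ}

/-- The continuation to `rowDomain` of the alternating double series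
`∑ k ≥ 1, ∑ n ≥ 1, (-1) ^ (k - 1) * (k * n * (n + a * k) * (n + b * k)) ^ (-s)`. -/
noncomputable def alternatingZeta (a b : ℝ) (s : ℂ) : ℂ :=
  eulerSum 3 fun k : ℕ ↦ rowContinuation a b s (k + 1)

theorem natCast_add_one_re_pos (k : ℕ) : 0 < ((k : ℂ) + 1).re := by
  simpa using k.cast_add_one_pos (α := ℝ)

theorem differentiableOn_alternatingZeta (ha : 0 ≤ a) (hb : 0 ≤ b) :
    DifferentiableOn ℂ (alternatingZeta a b) rowDomain :=
  differentiableOn_eulerSum one_lt_two isOpen_rowDomain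
    (fun k ↦ differentiableOn_rowContinuation_left ha hb (natCast_add_one_re_pos k))
    fun _ hs ↦ exists_eventually_linearGrowth_of_tendsto ha hb
      (isOpen_rightHalfPlane.eventually_mem hs.1) (continuousAt_rowGrowth hs)

theorem tendsto_alternatingZeta (ha : 0 ≤ a) (hb : 0 ≤ b) :
    Tendsto (fun t : ℝ ↦ alternatingZeta a b t) (𝓝[>] 0) (𝓝 (-(1 / 4 + (a + b) / 12))) := by
  obtain ⟨M, hM⟩ := exists_tendsto_rowGrowth_ofReal a b
  have hlim := tendsto_eulerSum one_lt_two
    (fun k ↦ tendsto_rowContinuation ha hb (natCast_add_one_re_pos k))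
    (exists_eventually_linearGrowth_of_tendsto ha hb
      (eventually_mem_nhdsWithin.mono fun t ht ↦ by simpa using ht) hM)
  have hvalue : eulerSum 3 (fun k : ℕ ↦ -1 / 2 - ((a : ℂ) + b) * (k + 1) / 3) =
      -(1 / 4 + (a + b) / 12) := by
    convert eulerSum_add_two_affine 1 (-1 / 2 - ((a : ℂ) + b) / 3) (-(a + b) / 3) using 1
    · congr 1
      ext k
      ring
    · ring
  exact hvalue ▸ hlim

end AlternatingZeta

section DoubleSeries

variable {a b : ℝ}

/-- The binary quartic form `x * y * (y + a * x) * (y + b * x)`; for `a = 1`, `b = 2` its values at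
positive integers are the products `6 * dim φ` of the theorem. -/
def quartic (a b x y : ℝ) : ℝ := x * y * (y + a * x) * (y + b * x)

theorem quartic_one_two_two_mul (x y : ℝ) :
    quartic 1 2 (2 * x) y = 16 * quartic (1 / 2) (1 / 4) y x := by
  unfold quartic
  ring

theorem quartic_half_quarter_two_mul (x y : ℝ) :
    quartic (1 / 2) (1 / 4) (2 * x) y = quartic 1 2 y x := by
  unfold quartic
  ring

theorem ofReal_cpow_eq_exp {r : ℝ} (hr : 0 < r) (s : ℂ) :
    (r : ℂ) ^ s = Complex.exp (Real.log r * s) := by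
  rw [Complex.cpow_def_of_ne_zero (by exact_mod_cast hr.ne'), Complex.ofReal_log hr.le]

theorem quartic_cpow_neg (ha : 0 ≤ a) (hb : 0 ≤ b) {x y : ℝ} (hx : 0 < x) (hy : 0 < y) (s : ℂ) :
    (quartic a b x y : ℂ) ^ (-s) =
      x ^ (-s) * (y ^ (-(3 * s)) * Complex.exp (-s * logProd a b (x / y))) := by
  have hfactor : quartic a b x y = x * y ^ 3 * ((1 + a * (x / y)) * (1 + b * (x / y))) := by
    unfold quartic
    field_simp
  have hu {c : ℝ} (hc : 0 ≤ c) : 0 < 1 + c * (x / y) := by positivity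
  have hlog : Real.log (quartic a b x y) = Real.log x + 3 * Real.log y +
      (Real.log (1 + a * (x / y)) + Real.log (1 + b * (x / y))) := by
    rw [hfactor, Real.log_mul (by positivity) (mul_pos (hu ha) (hu hb)).ne',
      Real.log_mul hx.ne' (by positivity), Real.log_mul (hu ha).ne' (hu hb).ne', Real.log_pow]
    norm_num
  have hlogProd : logProd a b (x / y) =
      (Real.log (1 + a * (x / y)) + Real.log (1 + b * (x / y)) : ℝ) := by
    rw [Complex.ofReal_add, Complex.ofReal_log (hu ha).le, Complex.ofReal_log (hu hb).le, logProd]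
    push_cast
    rfl
  rw [ofReal_cpow_eq_exp (by unfold quartic; positivity), ofReal_cpow_eq_exp hx,
    ofReal_cpow_eq_exp hy, hlogProd, ← Complex.exp_add, ← Complex.exp_add, hlog]
  push_cast
  ring_nf

theorem summable_quartic_cpow_neg (ha : 0 ≤ a) (hb : 0 ≤ b) {s : ℂ} (hs : 1 < s.re) :
    Summable fun p : ℕ × ℕ ↦ (quartic a b (p.1 + 1) (p.2 + 1) : ℂ) ^ (-s) := by
  have hprod : Summable fun p : ℕ × ℕ ↦
      ((p.1 : ℝ) + 1) ^ (-s.re) * ((p.2 : ℝ) + 1) ^ (-s.re) :=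
    (summable_natCast_add_one_rpow hs).mul_of_nonneg (summable_natCast_add_one_rpow hs)
      (fun n ↦ by positivity) (fun n ↦ by positivity)
  refine .of_norm_bounded hprod fun p ↦ ?_
  have hle : ((p.1 : ℝ) + 1) * (p.2 + 1) ≤ quartic a b (p.1 + 1) (p.2 + 1) := by
    have hfactor {c : ℝ} (hc : 0 ≤ c) : 1 ≤ (p.2 : ℝ) + 1 + c * (p.1 + 1) := by
      linarith [mul_nonneg hc (p.1.cast_add_one_pos (α := ℝ)).le, p.2.cast_nonneg (α := ℝ)]
    unfold quartic
    rw [mul_assoc _ (_ + _) (_ + _)]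
    exact le_mul_of_one_le_right (by positivity)
      (one_le_mul_of_one_le_of_one_le (hfactor ha) (hfactor hb))
  rw [Complex.norm_cpow_eq_rpow_re_of_pos (lt_of_lt_of_le (by positivity) hle), Complex.neg_re,
    ← Real.mul_rpow (by positivity) (by positivity)]
  exact Real.rpow_le_rpow_of_nonpos (by positivity) hle (by linarith)

theorem tsum_quartic_cpow_neg_row (ha : 0 ≤ a) (hb : 0 ≤ b) {s : ℂ} (hs : 1 < s.re) (k : ℕ) :
    ∑' n : ℕ, (quartic a b (k + 1) (n + 1) : ℂ) ^ (-s) = rowContinuation a b s (k + 1) := by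
  have hs₃ : 1 < (3 * s).re := by simpa using by linarith
  have hterm (n : ℕ) : (quartic a b (k + 1) (n + 1) : ℂ) ^ (-s) =
      ((k : ℂ) + 1) ^ (-s) * (((n : ℂ) + 1) ^ (-(3 * s)) + rowTerm a b s (k + 1) n) := by
    rw [quartic_cpow_neg ha hb k.cast_add_one_pos n.cast_add_one_pos, rowTerm]
    push_cast
    ring
  simp only [hterm]
  rw [tsum_mul_left, (summable_natCast_add_one_cpow hs₃).tsum_add
    (summable_rowTerm ha hb (by linarith) (natCast_add_one_re_pos k).le),
    tsum_natCast_add_one_cpow hs₃, rowContinuation, rowCorrection]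

/-- The Dirichlet series of the quartic form, which converges absolutely for `1 < re s`. -/
noncomputable def quarticZeta (a b : ℝ) (s : ℂ) : ℂ :=
  ∑' p : ℕ × ℕ, (quartic a b (p.1 + 1) (p.2 + 1) : ℂ) ^ (-s)

theorem alternatingZeta_eq_quarticZeta_sub (ha : 0 ≤ a) (hb : 0 ≤ b) {s : ℂ} (hs : 1 < s.re) :
    alternatingZeta a b s = quarticZeta a b s -
      2 * ∑' p : ℕ × ℕ, (quartic a b (2 * (p.1 + 1)) (p.2 + 1) : ℂ) ^ (-s) := by
  have hsummable := summable_quartic_cpow_neg ha hb hs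
  have hrows : Summable fun k : ℕ ↦ rowContinuation a b s (k + 1) :=
    hsummable.prod.congr fun k ↦ tsum_quartic_cpow_neg_row ha hb hs k
  have hodd (j : ℕ) : ((2 * j + 1 : ℕ) : ℝ) + 1 = 2 * (j + 1) := by
    push_cast
    ring
  rw [alternatingZeta, eulerSum_eq_altSum hrows, quarticZeta]
  simp only [← tsum_quartic_cpow_neg_row ha hb hs]
  simp only [altSum_tsum hsummable, hodd]

theorem quarticZeta_functional_equation {s : ℂ} (hs : 1 < s.re) :
    (1 - 4 * 16 ^ (-s)) * quarticZeta 1 2 s =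
      alternatingZeta 1 2 s + 2 * 16 ^ (-s) * alternatingZeta (1 / 2) (1 / 4) s := by
  have h₁ : ∑' p : ℕ × ℕ, (quartic 1 2 (2 * (p.1 + 1)) (p.2 + 1) : ℂ) ^ (-s) =
      16 ^ (-s) * quarticZeta (1 / 2) (1 / 4) s := by
    rw [quarticZeta, ← tsum_mul_left, ← (Equiv.prodComm ℕ ℕ).tsum_eq]
    refine tsum_congr fun p ↦ ?_
    rw [quartic_one_two_two_mul, Complex.ofReal_mul,
      Complex.mul_cpow_ofReal_nonneg (by norm_num) (by unfold quartic; positivity)]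
    simp
  have h₂ : ∑' p : ℕ × ℕ, (quartic (1 / 2) (1 / 4) (2 * (p.1 + 1)) (p.2 + 1) : ℂ) ^ (-s) =
      quarticZeta 1 2 s := by
    rw [quarticZeta, ← (Equiv.prodComm ℕ ℕ).tsum_eq]
    exact tsum_congr fun p ↦ by rw [quartic_half_quarter_two_mul]; simp
  rw [alternatingZeta_eq_quarticZeta_sub (by norm_num) (by norm_num) hs, h₁,
    alternatingZeta_eq_quarticZeta_sub (by norm_num) (by norm_num) hs, h₂]
  ring

end DoubleSeries

section AnalyticContinuation

/-- A convex region avoiding the poles `1 / 2` and `1 / 3` on which the identity theorem is applied: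
it contains the interval `(0, 1 / 4)` and meets the half-plane `1 < re s`. -/
def tiltedRegion : Set ℂ := {s | 0 < s.re ∧ 4 * s.re < 1 + s.im}

theorem isOpen_tiltedRegion : IsOpen tiltedRegion :=
  isOpen_rightHalfPlane.inter (isOpen_lt (Complex.continuous_re.const_mul 4)
    (Complex.continuous_im.const_add 1))

theorem convex_tiltedRegion : Convex ℝ tiltedRegion := by
  have hlin : IsLinearMap ℝ fun s : ℂ ↦ 4 * s.re - s.im :=
    ⟨fun s t ↦ by simp only [Complex.add_re, Complex.add_im]; ring,
      fun c s ↦ by simp only [Complex.smul_re, Complex.smul_im, smul_eq_mul]; ring⟩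
  convert (convex_halfSpace_re_gt 0).inter (convex_halfSpace_lt hlin 1) using 1
  ext s
  simp [tiltedRegion, sub_lt_iff_lt_add]

theorem ofReal_notMem_tiltedRegion {r : ℝ} (hr : 1 / 4 ≤ r) : (r : ℂ) ∉ tiltedRegion :=
  fun h ↦ by
    have := h.2
    simp only [Complex.ofReal_re, Complex.ofReal_im] at this
    linarith

theorem tiltedRegion_subset : tiltedRegion ⊆ {s | 0 < s.re ∧ s ≠ 1 / 2 ∧ s ≠ 1 / 3} := by
  refine fun s hs ↦ ⟨hs.1, ?_, ?_⟩ <;> rintro rfl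
  · exact ofReal_notMem_tiltedRegion (r := 1 / 2) (by norm_num) (by simpa using hs)
  · exact ofReal_notMem_tiltedRegion (r := 1 / 3) (by norm_num) (by simpa using hs)

theorem tiltedRegion_subset_rowDomain : tiltedRegion ⊆ rowDomain :=
  fun _ hs ↦ ⟨hs.1, (tiltedRegion_subset hs).2.2⟩

theorem ofReal_mem_tiltedRegion {t : ℝ} (ht : t ∈ Set.Ioo 0 (1 / 4)) : (t : ℂ) ∈ tiltedRegion :=
  ⟨by simpa using ht.1, by simpa using by linarith [ht.2]⟩

theorem eqOn_tiltedRegion {F G : ℂ → ℂ} (hF : DifferentiableOn ℂ F tiltedRegion)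
    (hG : DifferentiableOn ℂ G tiltedRegion) (hFG : ∀ s : ℂ, 1 < s.re → F s = G s) :
    Set.EqOn F G tiltedRegion := by
  refine (hF.analyticOnNhd isOpen_tiltedRegion).eqOn_of_preconnected_of_eventuallyEq
    (hG.analyticOnNhd isOpen_tiltedRegion) convex_tiltedRegion.isPreconnected (z₀ := ⟨2, 8⟩)
    (by norm_num [tiltedRegion]) ?_
  filter_upwards [(isOpen_lt continuous_const Complex.continuous_re).mem_nhds
    (show (1 : ℝ) < (⟨2, 8⟩ : ℂ).re by norm_num)] with s hs
  exact hFG s hs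

/-- The right-hand side of `quarticZeta_functional_equation`. -/
noncomputable def alternatingCombination (s : ℂ) : ℂ :=
  alternatingZeta 1 2 s + 2 * 16 ^ (-s) * alternatingZeta (1 / 2) (1 / 4) s

theorem differentiableOn_alternatingCombination :
    DifferentiableOn ℂ alternatingCombination rowDomain :=
  (differentiableOn_alternatingZeta (by norm_num) (by norm_num)).add
    (DifferentiableOn.mul (by fun_prop (disch := norm_num))
      (differentiableOn_alternatingZeta (by norm_num) (by norm_num)))

theorem tendsto_alternatingCombination :
    Tendsto (fun t : ℝ ↦ alternatingCombination t) (𝓝[>] 0) (𝓝 (-9 / 8)) := by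
  have h₁ := tendsto_alternatingZeta zero_le_one zero_le_two
  have h₂ := tendsto_alternatingZeta (a := 1 / 2) (b := 1 / 4) (by norm_num) (by norm_num)
  have hsixteen : Tendsto (fun t : ℝ ↦ (16 : ℂ) ^ (-t : ℂ)) (𝓝[>] 0) (𝓝 1) :=
    tendsto_const_cpow_one (by norm_num) (by fun_prop) (by simp)
  have hlim := h₁.add ((hsixteen.const_mul 2).mul h₂)
  have hvalue : -(1 / 4 + (((1 : ℝ) : ℂ) + (2 : ℝ)) / 12) +
      2 * 1 * -(1 / 4 + (((1 / 2 : ℝ) : ℂ) + (1 / 4 : ℝ)) / 12) = -9 / 8 := by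
    push_cast
    norm_num
  exact hvalue ▸ hlim

theorem tendsto_one_sub_four_mul_sixteen_cpow_neg :
    Tendsto (fun t : ℝ ↦ 1 - 4 * (16 : ℂ) ^ (-t : ℂ)) (𝓝[>] 0) (𝓝 (-3)) := by
  have hsixteen : Tendsto (fun t : ℝ ↦ (16 : ℂ) ^ (-t : ℂ)) (𝓝[>] 0) (𝓝 1) :=
    tendsto_const_cpow_one (by norm_num) (by fun_prop) (by simp)
  convert (hsixteen.const_mul 4).const_sub 1 using 2
  norm_num

theorem tendsto_alternatingCombination_div :
    Tendsto (fun t : ℝ ↦ 6 ^ (t : ℂ) * alternatingCombination t / (1 - 4 * 16 ^ (-t : ℂ)))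
      (𝓝[>] 0) (𝓝 (3 / 8)) := by
  have hsix : Tendsto (fun t : ℝ ↦ (6 : ℂ) ^ (t : ℂ)) (𝓝[>] 0) (𝓝 1) :=
    tendsto_const_cpow_one (by norm_num) (by fun_prop) (by simp)
  have hlim := (hsix.mul tendsto_alternatingCombination).div
    tendsto_one_sub_four_mul_sixteen_cpow_neg (by norm_num)
  have hvalue : (1 : ℂ) * (-9 / 8) / (-3) = 3 / 8 := by norm_num
  exact hvalue ▸ hlim

theorem tsum_weylDimension_cpow_neg (s : ℂ) :
    ∑' p : ℕ × ℕ, ((((p.1 + 1) * (p.2 + 1) * ((p.1 + 1) + (p.2 + 1)) *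
      ((p.1 + 1) + 2 * (p.2 + 1)) : ℕ) : ℂ)) ^ (-s) = quarticZeta 1 2 s := by
  rw [quarticZeta, ← (Equiv.prodComm ℕ ℕ).tsum_eq]
  refine tsum_congr fun p ↦ ?_
  simp only [quartic, Equiv.prodComm_apply, Prod.fst_swap, Prod.snd_swap]
  push_cast
  ring_nf

end AnalyticContinuation

theorem stmt6_general (Z : ℂ → ℂ)
    (hhol : DifferentiableOn ℂ Z {s : ℂ | 0 < s.re ∧ s ≠ 1 / 2 ∧ s ≠ 1 / 3})
    (hcont : ContinuousWithinAt Z {s : ℂ | 0 < s.re ∧ s ≠ 1 / 2 ∧ s ≠ 1 / 3} 0)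
    (hser : ∀ s : ℂ, 1 < s.re →
      Z s = (6 : ℂ) ^ s * ∑' p : ℕ × ℕ,
        ((((p.1 + 1) * (p.2 + 1) * ((p.1 + 1) + (p.2 + 1)) *
          ((p.1 + 1) + 2 * (p.2 + 1)) : ℕ) : ℂ)) ^ (-s)) :
    Z 0 = 3 / 8 := by
  have hcontinuation : Set.EqOn (fun s ↦ Z s * (1 - 4 * 16 ^ (-s)))
      (fun s ↦ 6 ^ s * alternatingCombination s) tiltedRegion := by
    refine eqOn_tiltedRegion ?_ ?_ fun s hs ↦ ?_
    · exact (hhol.mono tiltedRegion_subset).mul (by fun_prop (disch := norm_num))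
    · exact DifferentiableOn.mul (by fun_prop (disch := norm_num))
        (differentiableOn_alternatingCombination.mono tiltedRegion_subset_rowDomain)
    · simp only [hser s hs, tsum_weylDimension_cpow_neg, alternatingCombination,
        ← quarticZeta_functional_equation hs]
      ring
  have hregion : ∀ᶠ t : ℝ in 𝓝[>] 0, (t : ℂ) ∈ tiltedRegion := by
    filter_upwards [Ioo_mem_nhdsGT (show (0 : ℝ) < 1 / 4 by norm_num)] with t ht
    exact ofReal_mem_tiltedRegion ht
  have hZ : Tendsto (fun t : ℝ ↦ Z t) (𝓝[>] 0) (𝓝 (Z 0)) :=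
    hcont.tendsto.comp (tendsto_nhdsWithin_iff.2 ⟨tendsto_nhdsWithin_of_tendsto_nhds
      (Complex.continuous_ofReal.tendsto' _ _ Complex.ofReal_zero),
      hregion.mono fun t ht ↦ tiltedRegion_subset ht⟩)
  refine tendsto_nhds_unique_of_eventuallyEq hZ tendsto_alternatingCombination_div ?_
  filter_upwards [hregion,
    tendsto_one_sub_four_mul_sixteen_cpow_neg.eventually_ne (b₂ := 0) (by norm_num)] with t ht hne
  exact eq_div_of_mul_eq hne (hcontinuation ht)

theorem stmt6 (Z : ℂ → ℂ)
    (hhol : DifferentiableOn ℂ Z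
      {s : ℂ | -(1 / 4) < s.re ∧ s ≠ 1 / 2 ∧ s ≠ 1 / 3})
    (hser : ∀ s : ℂ, 1 / 2 < s.re →
      Z s = (6 : ℂ) ^ s * ∑' p : ℕ × ℕ,
        ((((p.1 + 1) * (p.2 + 1) * ((p.1 + 1) + (p.2 + 1)) *
          ((p.1 + 1) + 2 * (p.2 + 1)) : ℕ) : ℂ)) ^ (-s)) :
    Z 0 = 3 / 8 := by
  have hsub : {s : ℂ | 0 < s.re ∧ s ≠ 1 / 2 ∧ s ≠ 1 / 3} ⊆
      {s : ℂ | -(1 / 4) < s.re ∧ s ≠ 1 / 2 ∧ s ≠ 1 / 3} := fun s hs ↦ ⟨by linarith [hs.1], hs.2⟩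
  exact stmt6_general Z (hhol.mono hsub) ((hhol.continuousOn 0 (by norm_num)).mono hsub)
    fun s hs ↦ hser s (by linarith)
end
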